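/- arXiv:2403.20243 — 3 statements merged into one kernel-verified Lean document; each statement's English description precedes it below -/
import Mathlib

section
/- Let m ≥ 2 and let T : ℝ^m → ℝ be of class C². Let ε > 0 and assume that the set T⁻¹([−ε, ε]) is compact and that every critical point p of T with T(p) ∈ [−ε, ε] is nondegenerate. Then ℋ^{m−1}(T⁻¹(t)) is finite for every t ∈ [−ε, ε], and the function φ : [−ε, ε] → ℝ, φ(t) = ℋ^{m−1}(T⁻¹(t)), is continuous on [−ε, ε]. -/
open MeasureTheory
open scoped NNReal ENNReal

lemma push {E : Type*} [NormedAddCommGroup E] [InnerProductSpace ℝ E]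
    (T : E → ℝ) (G : E → E) (hG : ∀ x, HasFDerivAt T (innerSL ℝ (G x)) x)
    (B X : Set E) (L M c S : ℝ) (hL0 : 0 < L) (hM0 : 0 < M) (hc0 : 0 < c) (hS0 : 0 < S)
    (hL : ∀ x ∈ B, ∀ y ∈ B, ‖G x - G y‖ ≤ L * ‖x - y‖) (hM : ∀ x ∈ B, ‖G x‖ ≤ M)
    (hX : ∀ x ∈ X, ∀ s, |s| ≤ S → x + s • G x ∈ B) (hc : ∀ x ∈ X, c ≤ ‖G x‖)
    (hSL : S * L ≤ 1 / 2) (t t' : ℝ) (htt : |t' - t| ≤ c ^ 2 * S / 2) (hXt : ∀ x ∈ X, T x = t) :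
    ∃ f : E → E, (∀ x ∈ X, T (f x) = t') ∧
      ∀ x ∈ X, ∀ y ∈ X, (1 - (L + 6 * L * M ^ 2 / c ^ 2) * S) * ‖x - y‖ ≤ ‖f x - f y‖ := by
  have hXB : ∀ x ∈ X, x ∈ B := fun x hx => by simpa using hX x hx 0 (by simpa using hS0.le)
  have hd : ∀ x s, HasDerivAt (fun s : ℝ => T (x + s • G x)) (inner ℝ (G (x + s • G x)) (G x)) s := by
    intro x s
    have h1 : HasDerivAt (fun s : ℝ => x + s • G x) (G x) s := by
      simpa using ((hasDerivAt_id s).smul_const (G x)).const_add x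
    have := (hG (x + s • G x)).comp_hasDerivAt s h1
    simp only [innerSL_apply_apply] at this
    exact this
  have hlow : ∀ x ∈ X, ∀ s, |s| ≤ S → c ^ 2 / 2 ≤ inner ℝ (G (x + s • G x)) (G x) := by
    intro x hx s hs
    have h1 : inner ℝ (G (x + s • G x)) (G x)
        = inner ℝ (G (x + s • G x) - G x) (G x) + ‖G x‖ ^ 2 := by
      rw [inner_sub_left, real_inner_self_eq_norm_sq]; ring
    have h2 := abs_real_inner_le_norm (G (x + s • G x) - G x) (G x)
    have h3 := hL _ (hX x hx s hs) _ (hXB x hx)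
    have h4 : ‖x + s • G x - x‖ = |s| * ‖G x‖ := by simp [norm_smul]
    rw [h4] at h3
    have h5 : L * (|s| * ‖G x‖) ≤ 1 / 2 * ‖G x‖ := by
      have : |s| * L ≤ S * L := by gcongr
      nlinarith [norm_nonneg (G x)]
    have h6 : ‖G (x + s • G x) - G x‖ * ‖G x‖ ≤ 1 / 2 * ‖G x‖ * ‖G x‖ := by
      gcongr; linarith
    have := hc x hx
    have := (abs_le.1 h2).1
    nlinarith
  have hgrow : ∀ x ∈ X, ∀ a b, |a| ≤ S → |b| ≤ S → a ≤ b →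
      c ^ 2 / 2 * (b - a) ≤ T (x + b • G x) - T (x + a • G x) := by
    intro x hx a b ha hb hab
    refine (convex_Icc (-S) S).mul_sub_le_image_sub_of_le_deriv
      (f := fun s : ℝ => T (x + s • G x)) ?_ ?_ ?_ a (abs_le.1 ha) b (abs_le.1 hb) hab
    · exact fun s _ => (hd x s).continuousAt.continuousWithinAt
    · exact fun s _ => (hd x s).differentiableAt.differentiableWithinAt
    · intro s hs
      rw [(hd x s).deriv]
      exact hlow x hx s (abs_le.2 (by
        have := interior_subset hs
        exact this))
  have hex : ∀ x, ∃ s, x ∈ X → |s| ≤ S ∧ T (x + s • G x) = t' := by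
    intro x
    by_cases hx : x ∈ X
    · have h1 := hgrow x hx 0 S (by simpa using hS0.le) (abs_of_pos hS0).le hS0.le
      have h2 := hgrow x hx (-S) 0 (by simp [abs_of_pos hS0]) (by simpa using hS0.le) (by linarith)
      simp only [zero_smul, add_zero, hXt x hx] at h1 h2
      have h3 := abs_le.1 htt
      have hcont : ContinuousOn (fun s : ℝ => T (x + s • G x)) (Set.Icc (-S) S) :=
        fun s _ => (hd x s).continuousAt.continuousWithinAt
      obtain ⟨s, hs, h⟩ := intermediate_value_Icc (by linarith) hcont
        (show t' ∈ Set.Icc _ _ from ⟨by linarith, by linarith⟩)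
      exact ⟨s, fun _ => ⟨abs_le.2 hs, h⟩⟩
    · exact ⟨0, fun h => absurd h hx⟩
  choose s hs using hex
  refine ⟨fun x => x + s x • G x, fun x hx => (hs x hx).2, ?_⟩
  intro x hx y hy
  obtain ⟨hsx, hTx⟩ := hs x hx
  obtain ⟨hsy, hTy⟩ := hs y hy
  have hGxy := hL x (hXB x hx) y (hXB y hy)
  -- difference in x
  have hA : |(T (x + s x • G x) - T (y + s x • G y)) - (T x - T y)| ≤ 3 * L * M * ‖x - y‖ * S := by
    have := (convex_Icc (-S) S).norm_image_sub_le_of_norm_hasDerivWithin_le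
      (f := fun s : ℝ => T (x + s • G x) - T (y + s • G y))
      (f' := fun s => inner ℝ (G (x + s • G x)) (G x) - inner ℝ (G (y + s • G y)) (G y))
      (C := 3 * L * M * ‖x - y‖)
      (fun s _ => ((hd x s).sub (hd y s)).hasDerivWithinAt) ?_
      (show (0:ℝ) ∈ Set.Icc (-S) S from ⟨by linarith, hS0.le⟩) (abs_le.1 hsx)
    · simp only [zero_smul, add_zero, sub_zero, Real.norm_eq_abs] at this
      refine this.trans ?_
      gcongr
    · intro r hr
      have hr' : |r| ≤ S := abs_le.2 hr
      have h1 : inner ℝ (G (x + r • G x)) (G x) - inner ℝ (G (y + r • G y)) (G y)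
        = inner ℝ (G (x + r • G x) - G (y + r • G y)) (G x)
          + inner ℝ (G (y + r • G y)) (G x - G y) := by
        rw [inner_sub_left, inner_sub_right]; ring
      rw [h1]
      have h2 := norm_inner_le_norm (𝕜 := ℝ) (G (x + r • G x) - G (y + r • G y)) (G x)
      have h3 := norm_inner_le_norm (𝕜 := ℝ) (G (y + r • G y)) (G x - G y)
      have h4 := hL _ (hX x hx r hr') _ (hX y hy r hr')
      have h5 : ‖x + r • G x - (y + r • G y)‖ ≤ 2 * ‖x - y‖ := by
        have : x + r • G x - (y + r • G y) = (x - y) + r • (G x - G y) := by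
          rw [smul_sub]; abel
        rw [this]
        refine (norm_add_le _ _).trans ?_
        rw [norm_smul, Real.norm_eq_abs]
        have : |r| * ‖G x - G y‖ ≤ S * (L * ‖x - y‖) := by gcongr
        nlinarith [norm_nonneg (x - y)]
      have h6 : ‖G (x + r • G x) - G (y + r • G y)‖ * ‖G x‖ ≤ (L * (2 * ‖x - y‖)) * M := by
        have := hM x (hXB x hx)
        gcongr
        exact h4.trans (by gcongr)
      have h7 : ‖G (y + r • G y)‖ * ‖G x - G y‖ ≤ M * (L * ‖x - y‖) := by
        have := hM _ (hX y hy r hr')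
        gcongr
      refine (norm_add_le _ _).trans ?_
      linarith
  rw [hXt x hx, hXt y hy, hTx, sub_self, sub_zero] at hA
  have hB : c ^ 2 / 2 * |s x - s y| ≤ |t' - T (y + s x • G y)| := by
    rw [← hTy]
    rcases le_total (s x) (s y) with h | h
    · have := hgrow y hy _ _ hsx hsy h
      rw [abs_sub_comm, abs_of_nonneg (sub_nonneg.2 h)]
      exact this.trans (le_abs_self _)
    · have := hgrow y hy _ _ hsy hsx h
      rw [abs_of_nonneg (sub_nonneg.2 h), abs_sub_comm]
      exact this.trans (le_abs_self _)
  have hC : |s x - s y| ≤ 6 * L * M / c ^ 2 * S * ‖x - y‖ := by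
    have : |s x - s y| = (c ^ 2 / 2 * |s x - s y|) * (2 / c ^ 2) := by field_simp
    rw [this]
    calc _ ≤ (3 * L * M * ‖x - y‖ * S) * (2 / c ^ 2) := 
          mul_le_mul_of_nonneg_right (hB.trans hA) (by positivity)
      _ = _ := by ring
  have hD : x - y = (x + s x • G x - (y + s y • G y)) - (s x • (G x - G y) + (s x - s y) • G y) := by
    rw [smul_sub, sub_smul]; abel
  have hE : ‖x - y‖ ≤ ‖x + s x • G x - (y + s y • G y)‖ + (S * (L * ‖x - y‖) +
      (6 * L * M / c ^ 2 * S * ‖x - y‖) * M) := by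
    nth_rewrite 1 [hD]
    refine (norm_sub_le _ _).trans ?_
    gcongr
    refine (norm_add_le _ _).trans ?_
    rw [norm_smul, norm_smul, Real.norm_eq_abs, Real.norm_eq_abs]
    have := hM y (hXB y hy)
    gcongr
  have : (6 * L * M / c ^ 2 * S * ‖x - y‖) * M = 6 * L * M ^ 2 / c ^ 2 * S * ‖x - y‖ := by ring
  rw [this] at hE
  linarith
lemma anti_on {X Y : Type*} [MetricSpace X] [MeasurableSpace X] [BorelSpace X]
    [MetricSpace Y] [MeasurableSpace Y] [BorelSpace Y] (A : Set X) (f : X → Y) (K : ℝ≥0) (d : ℝ)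
    (hd : 0 ≤ d) (h : ∀ x ∈ A, ∀ y ∈ A, dist x y ≤ K * dist (f x) (f y)) :
    μH[d] A ≤ (K : ℝ≥0∞) ^ d * μH[d] (f '' A) := by
  have h1 : AntilipschitzWith K (fun x : A => f x) :=
    AntilipschitzWith.of_le_mul_dist fun x y => h x x.2 y y.2
  have h2 := h1.le_hausdorffMeasure_image hd Set.univ
  have h3 := (isometry_subtype_coe (s := A)).hausdorffMeasure_image (d := d) (Or.inl hd) Set.univ
  rw [Set.image_univ, Subtype.range_coe] at h3
  rw [h3]
  convert h2 using 3
  ext; simp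

lemma graph_meas {m : ℕ} (hm : 2 ≤ m) (e : EuclideanSpace ℝ (Fin m)) (he : ‖e‖ = 1) :
    ∃ κ : ℝ≥0∞, κ ≠ ⊤ ∧ ∀ (k : ℝ≥0) (p : EuclideanSpace ℝ (Fin m)) (r : ℝ), 0 ≤ r →
      ∀ A : Set (EuclideanSpace ℝ (Fin m)), A ⊆ Metric.closedBall p r →
      (∀ x ∈ A, ∀ y ∈ A, ‖x - y‖ ≤ k * ‖(x - y) - (inner ℝ e (x - y)) • e‖) →
      μH[(m : ℝ) - 1] A ≤ (k : ℝ≥0∞) ^ ((m : ℝ) - 1) * (ENNReal.ofReal (r ^ (m - 1)) * κ) := by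
  set F := (ℝ ∙ e)ᗮ with hF
  have hfr : Module.finrank ℝ F = m - 1 := by
    have h1 := Submodule.finrank_add_finrank_orthogonal (ℝ ∙ e)
    rw [finrank_span_singleton (by rintro rfl; simp at he), finrank_euclideanSpace_fin, ← hF] at h1
    omega
  have hd : ((m : ℝ) - 1) = ((Module.finrank ℝ F : ℕ) : ℝ) := by
    rw [hfr, Nat.cast_sub (by omega)]; simp
  let P := F.orthogonalProjectionOnto
  have hP : ∀ z, ((P z : F) : EuclideanSpace ℝ (Fin m)) = z - (inner ℝ e z) • e := by
    intro z
    have h1 := Submodule.starProjection_unit_singleton ℝ he z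
    have h2 := Submodule.starProjection_add_starProjection_orthogonal (K := (ℝ ∙ e)) z
    rw [h1] at h2
    exact eq_sub_of_add_eq' h2
  refine ⟨μH[(m : ℝ) - 1] (Metric.ball (0 : F) 1), ?_, ?_⟩
  · rw [hd]; exact measure_ball_lt_top.ne
  intro k p r hr A hA h
  refine (anti_on A P k _ (by have : (2:ℝ) ≤ m := by exact_mod_cast hm
                              linarith) ?_).trans ?_
  · intro x hx y hy
    rw [dist_eq_norm, dist_eq_norm, ← map_sub]
    have := h x hx y hy
    rw [← hP] at this
    exact this
  · gcongr
    have : P '' A ⊆ Metric.closedBall (P p) r := by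
      rintro _ ⟨x, hx, rfl⟩
      have h1 := hA hx
      rw [Metric.mem_closedBall, dist_eq_norm] at *
      rw [← map_sub]
      exact (F.norm_orthogonalProjectionOnto_apply_le _).trans h1
    refine (measure_mono this).trans ?_
    rw [hd, Measure.addHaar_closedBall _ _ hr, hfr]

lemma graph_anti {E : Type*} [NormedAddCommGroup E] [InnerProductSpace ℝ E]
    (T : E → ℝ) (hT : Differentiable ℝ T) (C : Set E) (hC : Convex ℝ C) (e : E) (he : ‖e‖ = 1)
    (k : ℝ)
    (h1 : ∀ x ∈ C, ‖fderiv ℝ T x‖ ≤ k * fderiv ℝ T x e) (h2 : ∀ x ∈ C, 0 < fderiv ℝ T x e)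
    (x y : E) (hx : x ∈ C) (hy : y ∈ C) (hxy : T x = T y) :
    ‖x - y‖ ≤ (1 + k) * ‖(x - y) - (inner ℝ e (x - y)) • e‖ := by
  obtain ⟨z, hz, h⟩ := domain_mvt (fun x _ => (hT x).hasFDerivAt.hasFDerivWithinAt) hC hy hx
  have hzC := hC.segment_subset hy hx hz
  rw [hxy, sub_self] at h
  set a := inner ℝ e (x - y)
  set u := (x - y) - a • e with hu
  have hxu : x - y = u + a • e := by rw [hu]; abel
  rw [hxu, map_add, map_smul, smul_eq_mul] at h
  have h3 := h1 z hzC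
  have h4 := h2 z hzC
  have h5 := (fderiv ℝ T z).le_opNorm u
  have h6 : |a| * fderiv ℝ T z e ≤ (k * ‖u‖) * fderiv ℝ T z e := by
    rw [← abs_of_pos h4, ← abs_mul, abs_of_pos h4]
    have : a * fderiv ℝ T z e = - fderiv ℝ T z u := by linarith
    rw [this, abs_neg, ← Real.norm_eq_abs]
    refine h5.trans ?_
    nlinarith [norm_nonneg u]
  have h7 := le_of_mul_le_mul_right h6 h4
  rw [hxu]
  refine (norm_add_le _ _).trans ?_
  rw [norm_smul, he, Real.norm_eq_abs]
  linarith

lemma graph_local {m : ℕ} (hm : 2 ≤ m) (T : EuclideanSpace ℝ (Fin m) → ℝ)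
    (hT : Differentiable ℝ T) (e : EuclideanSpace ℝ (Fin m)) (he : ‖e‖ = 1) (k : ℝ) (hk : 0 ≤ k)
    (C : Set (EuclideanSpace ℝ (Fin m))) (hC : Convex ℝ C)
    (h1 : ∀ x ∈ C, ‖fderiv ℝ T x‖ ≤ k * fderiv ℝ T x e) (h2 : ∀ x ∈ C, 0 < fderiv ℝ T x e) :
    ∃ κ : ℝ≥0∞, κ ≠ ⊤ ∧ ∀ (p : EuclideanSpace ℝ (Fin m)) (r : ℝ), 0 ≤ r → ∀ t : ℝ,
      μH[(m : ℝ) - 1] (T ⁻¹' {t} ∩ C ∩ Metric.closedBall p r)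
        ≤ ENNReal.ofReal (r ^ (m - 1)) * κ := by
  obtain ⟨κ, hκ, h⟩ := graph_meas hm e he
  have hm' : (2:ℝ) ≤ m := by exact_mod_cast hm
  obtain ⟨k', hk'⟩ : ∃ k' : ℝ≥0, (k' : ℝ) = 1 + k := ⟨⟨1 + k, by positivity⟩, rfl⟩
  refine ⟨(k' : ℝ≥0∞) ^ ((m : ℝ) - 1) * κ,
    ENNReal.mul_ne_top (ENNReal.rpow_ne_top_of_nonneg (by linarith) ENNReal.coe_ne_top) hκ, ?_⟩
  intro p r hr t
  refine (h k' p r hr _ Set.inter_subset_right ?_).trans (le_of_eq (by ring))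
  rintro x ⟨⟨hx, hxC⟩, -⟩ y ⟨⟨hy, hyC⟩, -⟩
  have hx' : T x = t := hx
  have hy' : T y = t := hy
  rw [hk']
  exact graph_anti T hT C hC e he k h1 h2 x y hxC hyC (hx'.trans hy'.symm)

lemma regular_fin {m : ℕ} (hm : 2 ≤ m) (T : EuclideanSpace ℝ (Fin m) → ℝ)
    (hT : ContDiff ℝ 2 T) (p : EuclideanSpace ℝ (Fin m)) (hp : fderiv ℝ T p ≠ 0) (t : ℝ) :
    ∃ U ∈ nhds p, μH[(m : ℝ) - 1] (T ⁻¹' {t} ∩ U) ≠ ⊤ := by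
  obtain ⟨e, he, hpe⟩ : ∃ e, ‖e‖ = 1 ∧ 0 < fderiv ℝ T p e := by
    obtain ⟨v, hv⟩ : ∃ v, fderiv ℝ T p v ≠ 0 := by
      by_contra! h
      exact hp (ContinuousLinearMap.ext h)
    have hv0 : v ≠ 0 := by rintro rfl; simp at hv
    have hn : 0 < ‖v‖ := norm_pos_iff.2 hv0
    rcases lt_or_gt_of_ne hv with h | h
    · refine ⟨-(‖v‖⁻¹ • v), by simp [norm_smul, hn.ne'], ?_⟩
      rw [map_neg, map_smul, smul_eq_mul]
      have := mul_neg_of_pos_of_neg (inv_pos.2 hn) h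
      linarith
    · refine ⟨‖v‖⁻¹ • v, by simp [norm_smul, hn.ne'], ?_⟩
      rw [map_smul, smul_eq_mul]
      positivity
  set α := fderiv ℝ T p e with hα
  have hc : Continuous (fderiv ℝ T) := hT.continuous_fderiv (by norm_num)
  have e1 : ∀ᶠ x in nhds p, α / 2 < fderiv ℝ T x e :=
    (hc.clm_apply continuous_const).continuousAt.eventually_const_lt (by linarith)
  have e2 : ∀ᶠ x in nhds p, ‖fderiv ℝ T x‖ < ‖fderiv ℝ T p‖ + 1 :=
    hc.norm.continuousAt.eventually_lt_const (by linarith)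
  obtain ⟨r, hr, hball⟩ := Metric.eventually_nhds_iff_ball.1 (e1.and e2)
  obtain ⟨κ, hκ, h⟩ := graph_local hm T (hT.differentiable (by norm_num)) e he
    ((‖fderiv ℝ T p‖ + 1) / (α / 2)) (by positivity) (Metric.ball p r) (convex_ball p r)
    (fun x hx => by
      obtain ⟨a1, a2⟩ := hball x hx
      calc _ ≤ (‖fderiv ℝ T p‖ + 1) := a2.le
        _ = (‖fderiv ℝ T p‖ + 1) / (α / 2) * (α / 2) := by field_simp
        _ ≤ _ := by gcongr)
    (fun x hx => by linarith [(hball x hx).1])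
  refine ⟨Metric.ball p r, Metric.ball_mem_nhds p hr, ne_top_of_le_ne_top
    (ENNReal.mul_ne_top ENNReal.ofReal_ne_top hκ) ((measure_mono ?_).trans (h p r hr.le t))⟩
  exact fun x hx => ⟨hx, Metric.ball_subset_closedBall hx.2⟩

lemma crit_small {m : ℕ} (hm : 2 ≤ m) (T : EuclideanSpace ℝ (Fin m) → ℝ)
    (hT : ContDiff ℝ 2 T) (p : EuclideanSpace ℝ (Fin m)) (hp : fderiv ℝ T p = 0)
    (hnd : ∀ v : EuclideanSpace ℝ (Fin m),
        (∀ w : EuclideanSpace ℝ (Fin m), fderiv ℝ (fun y => fderiv ℝ T y) p v w = 0) → v = 0)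
    (δ : ℝ≥0∞) (hδ : 0 < δ) :
    ∃ U ∈ nhds p, (∀ x ∈ U, fderiv ℝ T x = 0 → x = p) ∧
      ∀ t : ℝ, μH[(m : ℝ) - 1] (T ⁻¹' {t} ∩ U) ≤ δ := by
  have hm' : (2:ℝ) ≤ m := by exact_mod_cast hm
  set A := fderiv ℝ (fun y => fderiv ℝ T y) p with hA
  obtain ⟨K, hK0, hK⟩ := LinearMap.exists_antilipschitzWith
    (A : EuclideanSpace ℝ (Fin m) →ₗ[ℝ] (EuclideanSpace ℝ (Fin m) →L[ℝ] ℝ)) (by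
      rw [LinearMap.ker_eq_bot']
      intro v hv
      exact hnd v fun w => by
        have : A v = 0 := hv
        rw [this]; rfl)
  have hKv : ∀ v, ‖v‖ ≤ K * ‖A v‖ := fun v => by
    simpa using hK.le_mul_dist v 0
  let b : Fin m → EuclideanSpace ℝ (Fin m) := fun i => EuclideanSpace.single i 1
  have hb : ∀ i, ‖b i‖ = 1 := fun i => by simp [b]
  have hsum : ∀ v, ‖A v‖ ≤ ∑ i, |A v (b i)| := by
    intro v
    refine ContinuousLinearMap.opNorm_le_bound _ (by positivity) fun w => ?_
    have hw : w = ∑ i, w i • b i := by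
      have := (EuclideanSpace.basisFun (Fin m) ℝ).sum_repr w
      simpa [b] using this.symm
    calc ‖A v w‖ = ‖∑ i, w i * A v (b i)‖ := by
          nth_rewrite 1 [hw]; simp [map_sum]
      _ ≤ ∑ i, ‖w i * A v (b i)‖ := norm_sum_le _ _
      _ ≤ ∑ i, |A v (b i)| * ‖w‖ := by
          refine Finset.sum_le_sum fun i _ => ?_
          rw [norm_mul, mul_comm]
          have := PiLp.norm_apply_le w i
          rw [Real.norm_eq_abs (A v (b i))]
          gcongr
      _ = _ := by rw [Finset.sum_mul]
  have hKpos : (0:ℝ) < K := by exact_mod_cast hK0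
  set a : ℝ := 1 / (K * m) with ha
  have hmpos : (0:ℝ) < m := by linarith
  have ha0 : 0 < a := by positivity
  have hdir : ∀ v, ∃ i, a * ‖v‖ ≤ |A v (b i)| := by
    intro v
    have : ∑ i : Fin m, a * ‖v‖ ≤ ∑ i, |A v (b i)| := by
      refine le_trans ?_ (hsum v)
      rw [Finset.sum_const, Finset.card_univ, Fintype.card_fin, nsmul_eq_mul]
      have h1 : (m:ℝ) * (a * ‖v‖) = ‖v‖ / K := by rw [ha]; field_simp
      rw [h1, div_le_iff₀ hKpos, mul_comm]
      exact hKv v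
    obtain ⟨i, -, hi⟩ := Finset.exists_le_of_sum_le ⟨⟨0, by omega⟩, Finset.mem_univ _⟩ this
    exact ⟨i, hi⟩
  let e : Fin m × Bool → EuclideanSpace ℝ (Fin m) := fun j => if j.2 then b j.1 else - b j.1
  have he : ∀ j, ‖e j‖ = 1 := by
    rintro ⟨i, _ | _⟩ <;> simp [e, hb]
  have hdir' : ∀ v, ∃ j, a * ‖v‖ ≤ A v (e j) := by
    intro v
    obtain ⟨i, hi⟩ := hdir v
    rcases le_total 0 (A v (b i)) with h | h
    · exact ⟨(i, true), by simpa [e, abs_of_nonneg h] using hi⟩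
    · exact ⟨(i, false), by simpa [e, abs_of_nonpos h] using hi⟩
  have hdd : HasFDerivAt (fun y => fderiv ℝ T y) A p := by
    have : ContDiff ℝ 1 (fderiv ℝ T) := hT.fderiv_right (by norm_num)
    exact (this.differentiable (by norm_num) p).hasFDerivAt
  have hlit := (hasFDerivAt_iff_isLittleO.1 hdd).bound (half_pos ha0)
  obtain ⟨r0, hr0, hball⟩ := Metric.eventually_nhds_iff_ball.1 hlit
  simp only [hp, sub_zero] at hball
  let C : Fin m × Bool → Set (EuclideanSpace ℝ (Fin m)) := fun j =>
    {x | a * ‖x - p‖ ≤ A (x - p) (e j) ∧ 0 < A (x - p) (e j)} ∩ Metric.ball p r0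
  have hCc : ∀ j, Convex ℝ (C j) := by
    intro j
    refine Convex.inter ?_ (convex_ball p r0)
    rintro x ⟨hx1, hx2⟩ y ⟨hy1, hy2⟩ α β hα hβ hαβ
    have hz : α • x + β • y - p = α • (x - p) + β • (y - p) := by
      have : p = (α + β) • p := by rw [hαβ, one_smul]
      nth_rewrite 1 [this]
      rw [add_smul, smul_sub, smul_sub]; abel
    have hAz : A (α • x + β • y - p) (e j) = α * A (x - p) (e j) + β * A (y - p) (e j) := by
      rw [hz]; simp
    have hnz : ‖α • x + β • y - p‖ ≤ α * ‖x - p‖ + β * ‖y - p‖ := by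
      rw [hz]
      refine (norm_add_le _ _).trans ?_
      rw [norm_smul, norm_smul, Real.norm_of_nonneg hα, Real.norm_of_nonneg hβ]
    refine ⟨?_, ?_⟩
    · rw [hAz]
      have h1 := mul_le_mul_of_nonneg_left hx1 hα
      have h2 := mul_le_mul_of_nonneg_left hy1 hβ
      have h3 := mul_le_mul_of_nonneg_left hnz ha0.le
      linarith
    · rw [hAz]
      rcases hα.eq_or_lt with h | h
      · have : β = 1 := by linarith
        rw [← h, this]; linarith
      · have := mul_pos h hx2
        have := mul_nonneg hβ hy2.le
        linarith
  have hCe : ∀ j, ∀ x ∈ C j, a / 2 * ‖x - p‖ ≤ fderiv ℝ T x (e j) ∧ 0 < ‖x - p‖ := by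
    rintro j x ⟨⟨hx1, hx2⟩, hx3⟩
    have h1 := hball x hx3
    have h2 := (fderiv ℝ T x - A (x - p)).le_opNorm (e j)
    rw [he, mul_one, Real.norm_eq_abs, sub_apply] at h2
    have h3 := (abs_le.1 (h2.trans h1)).1
    refine ⟨by linarith, norm_pos_iff.2 fun h => ?_⟩
    rw [h] at hx2; simp at hx2
  have hloc : ∀ j, ∃ κ : ℝ≥0∞, κ ≠ ⊤ ∧
      ∀ (p : EuclideanSpace ℝ (Fin m)) (r : ℝ), 0 ≤ r → ∀ t : ℝ,
      μH[(m : ℝ) - 1] (T ⁻¹' {t} ∩ C j ∩ Metric.closedBall p r)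
        ≤ ENNReal.ofReal (r ^ (m - 1)) * κ := by
    intro j
    refine graph_local hm T (hT.differentiable (by norm_num)) (e j) (he j)
      ((‖A‖ + a / 2) / (a / 2)) (by positivity) (C j) (hCc j) ?_ ?_
    · intro x hx
      obtain ⟨h1, h2⟩ := hCe j x hx
      have h3 := hball x hx.2
      have h4 := A.le_opNorm (x - p)
      have h5 : ‖fderiv ℝ T x‖ ≤ ‖fderiv ℝ T x - A (x - p)‖ + ‖A (x - p)‖ := by
        simpa using norm_add_le (fderiv ℝ T x - A (x - p)) (A (x - p))
      calc _ ≤ (‖A‖ + a / 2) * ‖x - p‖ := by linarith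
        _ = (‖A‖ + a / 2) / (a / 2) * (a / 2 * ‖x - p‖) := by field_simp
        _ ≤ _ := by gcongr
    · intro x hx
      obtain ⟨h1, h2⟩ := hCe j x hx
      have : 0 < a / 2 * ‖x - p‖ := by positivity
      linarith
  choose κ hκ hloc using hloc
  have hQ : (∑ j, κ j) ≠ ⊤ := ENNReal.sum_ne_top.2 fun j _ => hκ j
  obtain ⟨r, hr, hrr0, hrδ⟩ : ∃ r, 0 < r ∧ r < r0 ∧ ENNReal.ofReal (r ^ (m - 1)) * ∑ j, κ j ≤ δ := by
    have h1 : Filter.Tendsto (fun r : ℝ => ENNReal.ofReal (r ^ (m - 1)) * ∑ j, κ j)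
        (nhdsWithin 0 (Set.Ioi 0)) (nhds (ENNReal.ofReal (0 ^ (m - 1)) * ∑ j, κ j)) := by
      refine ENNReal.Tendsto.mul_const ?_ (Or.inr hQ)
      exact ((ENNReal.continuous_ofReal.comp (continuous_pow (m - 1))).tendsto 0).mono_left
        nhdsWithin_le_nhds
    rw [zero_pow (by omega), ENNReal.ofReal_zero, zero_mul] at h1
    have h2 := h1.eventually_le_const hδ
    have h3 : ∀ᶠ r : ℝ in nhdsWithin 0 (Set.Ioi 0), r ∈ Set.Ioo 0 r0 := Ioo_mem_nhdsGT hr0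
    obtain ⟨r, h, h'⟩ := (h2.and h3).exists
    exact ⟨r, h'.1, h'.2, h⟩
  refine ⟨Metric.closedBall p r, Metric.closedBall_mem_nhds p hr, ?_, ?_⟩
  · intro x hx h
    have h1 := hball x (Metric.closedBall_subset_ball hrr0 hx)
    rw [h, zero_sub, norm_neg] at h1
    obtain ⟨j, hj⟩ := hdir' (x - p)
    have h2 := (A (x - p)).le_opNorm (e j)
    rw [he, mul_one, Real.norm_eq_abs] at h2
    have h3 := le_abs_self (A (x - p) (e j))
    have h4 : ‖x - p‖ ≤ 0 := by
      by_contra! h0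
      have := mul_pos ha0 h0
      linarith
    exact sub_eq_zero.1 (norm_le_zero_iff.1 h4)
  · intro t
    have hsub : T ⁻¹' {t} ∩ Metric.closedBall p r ⊆
        {p} ∪ ⋃ j, (T ⁻¹' {t} ∩ C j ∩ Metric.closedBall p r) := by
      rintro x ⟨hx1, hx2⟩
      by_cases hxp : x = p
      · exact Or.inl hxp
      · right
        obtain ⟨j, hj⟩ := hdir' (x - p)
        have : 0 < a * ‖x - p‖ := mul_pos ha0 (norm_pos_iff.2 (sub_ne_zero.2 hxp))
        exact Set.mem_iUnion.2 ⟨j, ⟨hx1, ⟨hj, by linarith⟩,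
          Metric.closedBall_subset_ball hrr0 hx2⟩, hx2⟩
    have : NullSingletonClass (μH[(m : ℝ) - 1] : Measure (EuclideanSpace ℝ (Fin m))) :=
      Measure.nullSingletonClass_hausdorff _ (by linarith)
    refine (measure_mono hsub).trans ((measure_union_le _ _).trans ?_)
    rw [measure_singleton, zero_add]
    refine (measure_iUnion_fintype_le _ _).trans (le_trans ?_ hrδ)
    rw [Finset.mul_sum]
    exact Finset.sum_le_sum fun j _ => hloc j p r hr.le t

lemma push_meas {m : ℕ} (hm : 2 ≤ m) (T : EuclideanSpace ℝ (Fin m) → ℝ)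
    (hT : ContDiff ℝ 2 T) (W : Set (EuclideanSpace ℝ (Fin m))) (hW : IsCompact W)
    (c : ℝ) (hc0 : 0 < c) (hc : ∀ x ∈ W, c ≤ ‖fderiv ℝ T x‖) (δ : ℝ) (hδ : 0 < δ) :
    ∃ η > 0, ∀ t t' : ℝ, |t' - t| ≤ η →
      μH[(m : ℝ) - 1] (T ⁻¹' {t} ∩ W) ≤ ENNReal.ofReal (1 + δ) * μH[(m : ℝ) - 1] (T ⁻¹' {t'}) := by
  have hm' : (2:ℝ) ≤ m := by exact_mod_cast hm
  obtain ⟨R, hR⟩ := hW.isBounded.subset_closedBall 0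
  set B := Metric.closedBall (0 : EuclideanSpace ℝ (Fin m)) (R + 1) with hB
  have hBc : IsCompact B := isCompact_closedBall _ _
  let G : EuclideanSpace ℝ (Fin m) → EuclideanSpace ℝ (Fin m) :=
    fun x => (InnerProductSpace.toDual ℝ _).symm (fderiv ℝ T x)
  have hGn : ∀ x, ‖G x‖ = ‖fderiv ℝ T x‖ := fun x => by simp [G]
  have hG : ∀ x, HasFDerivAt T (innerSL ℝ (G x)) x := by
    intro x
    have h1 : innerSL ℝ (G x) = fderiv ℝ T x := by
      ext v
      rw [innerSL_apply_apply]
      exact InnerProductSpace.toDual_symm_apply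
    rw [h1]
    exact (hT.differentiable (by norm_num) x).hasFDerivAt
  have hD : ContDiff ℝ 1 (fderiv ℝ T) := hT.fderiv_right (by norm_num)
  obtain ⟨L, hL⟩ := hBc.exists_bound_of_continuousOn
    (hD.continuous_fderiv (by norm_num)).continuousOn
  obtain ⟨M, hM⟩ := hBc.exists_bound_of_continuousOn hD.continuous.continuousOn
  set L' := max L 1 with hL'
  set M' := max M 1 with hM'
  have hL'0 : 0 < L' := lt_of_lt_of_le one_pos (le_max_right _ _)
  have hM'0 : 0 < M' := lt_of_lt_of_le one_pos (le_max_right _ _)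
  have hLip : ∀ x ∈ B, ∀ y ∈ B, ‖G x - G y‖ ≤ L' * ‖x - y‖ := by
    intro x hx y hy
    have h1 := (convex_closedBall (0 : EuclideanSpace ℝ (Fin m)) (R + 1)).norm_image_sub_le_of_norm_fderiv_le
      (f := fderiv ℝ T) (𝕜 := ℝ) (fun z _ => hD.differentiable (by norm_num) z)
      (fun z hz => (hL z hz).trans (le_max_left L 1)) hy hx
    have h2 : G x - G y = (InnerProductSpace.toDual ℝ _).symm (fderiv ℝ T x - fderiv ℝ T y) := by
      simp [G]
    rw [h2, LinearIsometryEquiv.norm_map]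
    exact h1
  have hMb : ∀ x ∈ B, ‖G x‖ ≤ M' := fun x hx => by
    rw [hGn]; exact (hM x hx).trans (le_max_left _ _)
  obtain ⟨q, hq0, hq1, hq⟩ : ∃ q : ℝ, 0 < q ∧ q < 1 ∧ ((1 - q)⁻¹) ^ ((m : ℝ) - 1) ≤ 1 + δ := by
    have h1 : ContinuousAt (fun q : ℝ => ((1 - q)⁻¹) ^ ((m : ℝ) - 1)) 0 := by
      refine ContinuousAt.rpow_const ?_ (Or.inr (by linarith))
      exact ContinuousAt.inv₀ (by fun_prop) (by norm_num)
    have h2 := (h1.mono_left (nhdsWithin_le_nhds (s := Set.Ioi 0))).eventually_le_const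
      (show ((1 - (0:ℝ))⁻¹) ^ ((m : ℝ) - 1) < 1 + δ by simpa using hδ)
    have h3 : ∀ᶠ r : ℝ in nhdsWithin 0 (Set.Ioi 0), r ∈ Set.Ioo 0 1 := Ioo_mem_nhdsGT one_pos
    obtain ⟨r, h, h'⟩ := (h2.and h3).exists
    exact ⟨r, h'.1, h'.2, h⟩
  set Q := L' + 6 * L' * M' ^ 2 / c ^ 2 with hQ
  have hQ0 : 0 < Q := by positivity
  set S := min (1 / (2 * L')) (min (1 / M') (q / Q)) with hS
  have hS0 : 0 < S := by positivity
  have hS1 : S * L' ≤ 1 / 2 := by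
    have : S ≤ 1 / (2 * L') := min_le_left _ _
    calc _ ≤ 1 / (2 * L') * L' := by gcongr
      _ = _ := by field_simp
  have hS2 : S * M' ≤ 1 := by
    have : S ≤ 1 / M' := (min_le_right _ _).trans (min_le_left _ _)
    calc _ ≤ 1 / M' * M' := by gcongr
      _ = _ := by field_simp
  have hS3 : Q * S ≤ q := by
    have : S ≤ q / Q := (min_le_right _ _).trans (min_le_right _ _)
    calc _ ≤ Q * (q / Q) := by gcongr
      _ = _ := by field_simp
  refine ⟨c ^ 2 * S / 2, by positivity, ?_⟩
  intro t t' htt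
  have hWB : ∀ x ∈ W, x ∈ B := fun x hx =>
    Metric.closedBall_subset_closedBall (by linarith) (hR hx)
  obtain ⟨f, hf1, hf2⟩ := push T G hG B (T ⁻¹' {t} ∩ W) L' M' c S hL'0 hM'0 hc0 hS0 hLip hMb
    (by
      rintro x ⟨-, hx⟩ s hs
      have h1 := hR hx
      rw [mem_closedBall_zero_iff] at h1
      rw [hB, mem_closedBall_zero_iff]
      refine (norm_add_le _ _).trans ?_
      rw [norm_smul, Real.norm_eq_abs]
      have h2 := hMb x (hWB x hx)
      have : |s| * ‖G x‖ ≤ S * M' := by gcongr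
      linarith)
    (fun x hx => by rw [hGn]; exact hc x hx.2) hS1 t t' htt (fun x hx => hx.1)
  obtain ⟨K, hK⟩ : ∃ K : ℝ≥0, (K : ℝ) = (1 - q)⁻¹ :=
    ⟨⟨(1 - q)⁻¹, inv_nonneg.2 (by linarith)⟩, rfl⟩
  have h1q : 0 < 1 - q := by linarith
  refine (anti_on _ f K ((m : ℝ) - 1) (by linarith) ?_).trans ?_
  · intro x hx y hy
    rw [dist_eq_norm, dist_eq_norm, hK]
    have h1 := hf2 x hx y hy
    rw [inv_mul_eq_div, le_div_iff₀ h1q, mul_comm]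
    refine le_trans ?_ h1
    gcongr
  · gcongr
    · have h3 : (K : ℝ≥0∞) = ENNReal.ofReal ((1 - q)⁻¹) := by
        rw [← hK, ENNReal.ofReal_coe_nnreal]
      rw [h3, ENNReal.ofReal_rpow_of_nonneg (inv_nonneg.2 h1q.le) (by linarith)]
      exact ENNReal.ofReal_le_ofReal hq
    · rintro _ ⟨x, hx, rfl⟩
      exact hf1 x hx

set_option maxHeartbeats 1000000 in
theorem stmt8 {m : ℕ} (hm : 2 ≤ m) (T : EuclideanSpace ℝ (Fin m) → ℝ)
    (hT : ContDiff ℝ 2 T) (ε : ℝ) (hε : 0 < ε)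
    (hcomp : IsCompact (T ⁻¹' Set.Icc (-ε) ε))
    (hnd : ∀ p : EuclideanSpace ℝ (Fin m), T p ∈ Set.Icc (-ε) ε → fderiv ℝ T p = 0 →
      ∀ v : EuclideanSpace ℝ (Fin m),
        (∀ w : EuclideanSpace ℝ (Fin m), fderiv ℝ (fun y => fderiv ℝ T y) p v w = 0) →
        v = 0) :
    (∀ t ∈ Set.Icc (-ε) ε, μH[(m : ℝ) - 1] (T ⁻¹' {t}) ≠ ⊤) ∧
    ContinuousOn (fun t : ℝ => (μH[(m : ℝ) - 1] (T ⁻¹' {t})).toReal)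
      (Set.Icc (-ε) ε) := by
  have hDc : Continuous (fderiv ℝ T) := hT.continuous_fderiv (by norm_num)
  have hfin : ∀ t ∈ Set.Icc (-ε) ε, μH[(m : ℝ) - 1] (T ⁻¹' {t}) ≠ ⊤ := by
    intro t ht
    have hsub : T ⁻¹' {t} ⊆ T ⁻¹' Set.Icc (-ε) ε :=
      Set.preimage_mono (Set.singleton_subset_iff.2 ht)
    have hc : IsCompact (T ⁻¹' {t}) :=
      hcomp.of_isClosed_subset (isClosed_singleton.preimage hT.continuous) hsub
    refine (hc.measure_lt_top_of_nhdsWithin fun p hp => ?_).ne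
    obtain ⟨U, hU, hUt⟩ : ∃ U ∈ nhds p, μH[(m : ℝ) - 1] (T ⁻¹' {t} ∩ U) ≠ ⊤ := by
      by_cases h : fderiv ℝ T p = 0
      · obtain ⟨U, hU, -, h3⟩ := crit_small hm T hT p h (hnd p (hsub hp) h) 1 one_pos
        exact ⟨U, hU, ne_top_of_le_ne_top ENNReal.one_ne_top (h3 t)⟩
      · exact regular_fin hm T hT p h t
    exact ⟨T ⁻¹' {t} ∩ U, Filter.inter_mem self_mem_nhdsWithin (mem_nhdsWithin_of_mem_nhds hU),
      hUt.lt_top⟩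
  refine ⟨hfin, ?_⟩
  -- critical set
  set Z := T ⁻¹' Set.Icc (-ε) ε ∩ {x | fderiv ℝ T x = 0} with hZ
  have hZc : IsCompact Z := hcomp.inter_right (isClosed_eq hDc continuous_const)
  have hZf : Z.Finite := by
    have h1 : ∀ p ∈ Z, ∃ U ∈ nhds p, ∀ x ∈ U, fderiv ℝ T x = 0 → x = p := by
      rintro p ⟨hp1, hp2⟩
      obtain ⟨U, hU, h2, -⟩ := crit_small hm T hT p hp2 (hnd p hp1 hp2) 1 one_pos
      exact ⟨U, hU, h2⟩
    choose! U hU hUp using h1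
    obtain ⟨s, hs, hsZ⟩ := hZc.elim_nhds_subcover U hU
    refine s.finite_toSet.subset fun x hx => ?_
    obtain ⟨p, hp, hxp⟩ := Set.mem_iUnion₂.1 (hsZ hx)
    rw [hUp p (hs p hp) x hxp hx.2]
    exact hp
  have key : ∀ δ : ℝ, 0 < δ → ∃ η > 0, ∀ t ∈ Set.Icc (-ε) ε, ∀ t' ∈ Set.Icc (-ε) ε,
      |t' - t| ≤ η → (μH[(m : ℝ) - 1] (T ⁻¹' {t})).toReal ≤
        (1 + δ) * (μH[(m : ℝ) - 1] (T ⁻¹' {t'})).toReal + δ := by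
    intro δ hδ
    set N := hZf.toFinset.card with hN
    set δ' : ℝ := δ / (N + 1) with hδ'
    have hδ'0 : 0 < δ' := by positivity
    have h1 : ∀ p ∈ Z, ∃ U ∈ nhds p,
        ∀ t : ℝ, μH[(m : ℝ) - 1] (T ⁻¹' {t} ∩ U) ≤ ENNReal.ofReal δ' := by
      rintro p ⟨hp1, hp2⟩
      obtain ⟨U, hU, -, h2⟩ := crit_small hm T hT p hp2 (hnd p hp1 hp2) (ENNReal.ofReal δ')
        (ENNReal.ofReal_pos.2 hδ'0)
      exact ⟨U, hU, h2⟩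
    choose! U hU hUt using h1
    set V := ⋃ p ∈ hZf.toFinset, interior (U p) with hV
    have hVo : IsOpen V := isOpen_biUnion fun p _ => isOpen_interior
    have hZV : Z ⊆ V := fun p hp =>
      Set.mem_iUnion₂.2 ⟨p, hZf.mem_toFinset.2 hp, mem_interior_iff_mem_nhds.2 (hU p hp)⟩
    have hVt : ∀ t : ℝ, μH[(m : ℝ) - 1] (T ⁻¹' {t} ∩ V) ≤ ENNReal.ofReal δ := by
      intro t
      have h2 : T ⁻¹' {t} ∩ V ⊆ ⋃ p ∈ hZf.toFinset, (T ⁻¹' {t} ∩ U p) := by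
        rintro x ⟨hx, hxV⟩
        obtain ⟨p, hp, hxp⟩ := Set.mem_iUnion₂.1 hxV
        exact Set.mem_iUnion₂.2 ⟨p, hp, hx, interior_subset hxp⟩
      refine (measure_mono h2).trans ((measure_biUnion_finset_le _ _).trans ?_)
      refine (Finset.sum_le_sum fun p hp => hUt p (hZf.mem_toFinset.1 hp) t).trans ?_
      rw [Finset.sum_const, nsmul_eq_mul, ← ENNReal.ofReal_natCast,
        ← ENNReal.ofReal_mul (by positivity)]
      refine ENNReal.ofReal_le_ofReal ?_
      rw [hδ', ← mul_div_assoc, div_le_iff₀ (by positivity)]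
      have hNc : hZf.toFinset.card = N := rfl
      rw [hNc]
      nlinarith only [hδ]
    set W := T ⁻¹' Set.Icc (-ε) ε \ V with hW
    have hWc : IsCompact W := hcomp.diff hVo
    obtain ⟨c, hc0, hc⟩ : ∃ c : ℝ, 0 < c ∧ ∀ x ∈ W, c ≤ ‖fderiv ℝ T x‖ := by
      rcases W.eq_empty_or_nonempty with h | h
      · exact ⟨1, one_pos, by simp [h]⟩
      · obtain ⟨x, hx, hmin⟩ := hWc.exists_isMinOn h hDc.norm.continuousOn
        refine ⟨‖fderiv ℝ T x‖, norm_pos_iff.2 fun h0 => hx.2 (hZV ⟨hx.1, h0⟩), fun y hy => hmin hy⟩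
    obtain ⟨η, hη, h⟩ := push_meas hm T hT W hWc c hc0 hc δ hδ
    refine ⟨η, hη, fun t ht t' ht' htt => ?_⟩
    have h3 : μH[(m : ℝ) - 1] (T ⁻¹' {t}) ≤
        ENNReal.ofReal (1 + δ) * μH[(m : ℝ) - 1] (T ⁻¹' {t'}) + ENNReal.ofReal δ := by
      have h2 : T ⁻¹' {t} ⊆ (T ⁻¹' {t} ∩ W) ∪ (T ⁻¹' {t} ∩ V) := by
        intro x hx
        by_cases hxV : x ∈ V
        · exact Or.inr ⟨hx, hxV⟩
        · refine Or.inl ⟨hx, ?_, hxV⟩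
          have : T x = t := hx
          rw [Set.mem_preimage, this]; exact ht
      exact (measure_mono h2).trans ((measure_union_le _ _).trans (add_le_add (h t t' htt) (hVt t)))
    have h4 := ENNReal.toReal_mono (ENNReal.add_ne_top.2
      ⟨ENNReal.mul_ne_top ENNReal.ofReal_ne_top (hfin t' ht'), ENNReal.ofReal_ne_top⟩) h3
    rwa [ENNReal.toReal_add (ENNReal.mul_ne_top ENNReal.ofReal_ne_top (hfin t' ht'))
      ENNReal.ofReal_ne_top, ENNReal.toReal_mul, ENNReal.toReal_ofReal (by positivity),
      ENNReal.toReal_ofReal hδ.le] at h4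
  rw [Metric.continuousOn_iff]
  intro t0 ht0 ξ hξ
  set a0 := (μH[(m : ℝ) - 1] (T ⁻¹' {t0})).toReal with ha0
  have ha00 : 0 ≤ a0 := ENNReal.toReal_nonneg
  set δ := min 1 (ξ / (2 * (2 * a0 + 2))) with hδ
  have hδ0 : 0 < δ := by positivity
  have hδ1 : δ ≤ 1 := min_le_left _ _
  have hδ2 : δ * (2 * a0 + 2) ≤ ξ / 2 := by
    have : δ ≤ ξ / (2 * (2 * a0 + 2)) := min_le_right _ _
    calc _ ≤ ξ / (2 * (2 * a0 + 2)) * (2 * a0 + 2) := by gcongr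
      _ = _ := by field_simp
  obtain ⟨η, hη, h⟩ := key δ hδ0
  refine ⟨η, hη, fun t ht htt => ?_⟩
  rw [Real.dist_eq] at htt
  have h1 := h t ht t0 ht0 (by rw [abs_sub_comm]; exact htt.le)
  have h2 := h t0 ht0 t ht htt.le
  rw [Real.dist_eq, abs_lt]
  rw [← ha0] at *
  set b := (μH[(m : ℝ) - 1] (T ⁻¹' {t})).toReal with hb
  have hb0 : 0 ≤ b := ENNReal.toReal_nonneg
  have h3 : b ≤ 2 * a0 + 1 := by nlinarith
  have h4 : δ * b ≤ δ * (2 * a0 + 1) := by gcongr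
  have h5 : 0 ≤ δ * a0 := by positivity
  constructor <;> nlinarith
end

section
/- Let m ≥ 2 and let T : ℝ^m → ℝ be of class C². Let ε > 0 and assume that T⁻¹([−ε, ε]) is compact, that every critical point p of T with T(p) ∈ [−ε, ε] is nondegenerate, and that 0 is the only critical value of T in [−ε, ε]. Define φ(t) = ℋ^{m−1}(T⁻¹(t)). Then φ is differentiable at every t ∈ (−ε, ε) with t ≠ 0, and there exist C > 0 and ε' ∈ (0, ε) such that for all t ∈ (−ε', ε') with t ≠ 0: |φ'(t)| ≤ C if m ≥ 4; |φ'(t)| ≤ C·log(1/|t|) if m = 3; and |φ'(t)| ≤ C·|t|^{−1/2} if m = 2. -/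
section Helpers
section PartA
open MeasureTheory Set Filter Topology
open scoped NNReal ENNReal

section Area
variable {W E : Type*} [NormedAddCommGroup W] [NormedSpace ℝ W] [FiniteDimensional ℝ W]
  [MeasurableSpace W] [BorelSpace W]
  [NormedAddCommGroup E] [NormedSpace ℝ E] [MeasurableSpace E] [BorelSpace E]

theorem area_local {d : ℕ} (hd : Module.finrank ℝ W = d) {Γ : W → E} {L : W →L[ℝ] E} {y₀ : W}
    (hΓ : HasStrictFDerivAt Γ L y₀) (P : W ≃L[ℝ] W) (hP : ∀ w, ‖P w‖ = ‖L w‖)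
    (K : ℝ≥0) (hK : 1 < K) :
    ∃ U ∈ 𝓝 y₀, ∀ A ⊆ U,
      μH[(d : ℝ)] (Γ '' A) ≤ K ^ d *
        (ENNReal.ofReal |LinearMap.det (P : W →ₗ[ℝ] W)| * μH[(d : ℝ)] A) ∧
      ENNReal.ofReal |LinearMap.det (P : W →ₗ[ℝ] W)| * μH[(d : ℝ)] A
        ≤ K ^ d * μH[(d : ℝ)] (Γ '' A) := by
  have hK' : (1 : ℝ) < K := by exact_mod_cast hK
  set δ : ℝ := 1 - 1 / K with hδ
  have hKpos : (0 : ℝ) < K := by linarith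
  have hδ0 : 0 < δ := by
    rw [hδ, sub_pos, div_lt_one hKpos]; exact hK'
  -- constant for P inverse
  set M : ℝ := ‖(P.symm : W →L[ℝ] W)‖ + 1 with hM
  have hM0 : 0 < M := by positivity
  have hPM : ∀ w, ‖w‖ ≤ M * ‖P w‖ := fun w => by
    have := (P.symm : W →L[ℝ] W).le_opNorm (P w)
    simp only [ContinuousLinearEquiv.coe_coe, ContinuousLinearEquiv.symm_apply_apply] at this
    nlinarith [norm_nonneg (P w)]
  have hc : (0 : ℝ≥0) < ⟨δ / M, by positivity⟩ := by
    have : 0 < δ / M := by positivity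
    exact_mod_cast this
  obtain ⟨U, hU, happ⟩ := hΓ.approximates_deriv_on_nhds (c := ⟨δ / M, by positivity⟩) (Or.inr hc)
  have key : ∀ y ∈ U, ∀ z ∈ U, ‖Γ y - Γ z‖ ≤ K * ‖P y - P z‖ ∧ ‖P y - P z‖ ≤ K * ‖Γ y - Γ z‖ := by
    intro y hy z hz
    have h1 : ‖Γ y - Γ z - L (y - z)‖ ≤ δ / M * ‖y - z‖ := happ _ hy _ hz
    have h2 := hPM (y - z)
    have h3 : δ / M * ‖y - z‖ ≤ δ * ‖P (y - z)‖ := by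
      rw [div_mul_eq_mul_div, div_le_iff₀ hM0]
      nlinarith
    rw [← map_sub]
    have h4 := norm_sub_norm_le (Γ y - Γ z) (L (y - z))
    have h5 := norm_sub_norm_le (L (y - z)) (Γ y - Γ z)
    rw [norm_sub_rev (L (y - z))] at h5
    rw [← hP] at h4 h5
    have hn := norm_nonneg (P (y - z))
    constructor
    · have : 1 + δ ≤ K := by
        rw [hδ]
        have : 2 - 1 / (K:ℝ) ≤ K := by
          have : (K:ℝ) * (1/K) = 1 := by field_simp
          nlinarith [sq_nonneg ((K:ℝ) - 1)]
        linarith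
      nlinarith
    · have : (1 - δ) * ‖P (y - z)‖ ≤ ‖Γ y - Γ z‖ := by linarith
      have h6 : 1 - δ = 1 / K := by rw [hδ]; ring
      rw [h6, div_mul_eq_mul_div, div_le_iff₀ hKpos] at this
      linarith
  refine ⟨U, hU, fun A hA => ?_⟩
  have : Measure.IsAddHaarMeasure (μH[(d : ℝ)] : Measure W) := by
    rw [← hd]; infer_instance
  have hdet : μH[(d : ℝ)] (P '' A) = ENNReal.ofReal |LinearMap.det (P : W →ₗ[ℝ] W)| * μH[(d : ℝ)] A :=
    Measure.addHaar_image_continuousLinearEquiv _ P A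
  rw [← hdet]
  constructor
  · have hl : LipschitzOnWith K (Γ ∘ P.symm) (P '' A) := by
      rw [lipschitzOnWith_iff_norm_sub_le]
      rintro _ ⟨y, hy, rfl⟩ _ ⟨z, hz, rfl⟩
      simpa using (key y (hA hy) z (hA hz)).1
    have := hl.hausdorffMeasure_image_le (d := d) (by positivity)
    rw [← image_comp, ENNReal.rpow_natCast] at this
    have e : (Γ ∘ P.symm) ∘ P = Γ := by funext x; simp
    rwa [e] at this
  · have hl : LipschitzOnWith K (P ∘ Function.invFunOn Γ A) (Γ '' A) := by
      rw [lipschitzOnWith_iff_norm_sub_le]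
      intro y hy z hz
      have h1 := Function.invFunOn_pos hy
      have h2 := Function.invFunOn_pos hz
      have := (key _ (hA h1.1) _ (hA h2.1)).2
      rwa [h1.2, h2.2] at this
    have := hl.hausdorffMeasure_image_le (d := d) (by positivity)
    rw [← image_comp, ENNReal.rpow_natCast] at this
    refine le_trans (measure_mono ?_) this
    rintro _ ⟨y, hy, rfl⟩
    refine ⟨y, hy, ?_⟩
    have h1 := Function.invFunOn_pos (f := Γ) (mem_image_of_mem Γ hy)
    have := (key _ (hA h1.1) _ (hA hy)).2
    rw [h1.2, sub_self, norm_zero, mul_zero] at this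
    simpa [sub_eq_zero] using this

theorem area_formula {d : ℕ} (hd : Module.finrank ℝ W = d) {Γ : W → E} {Y : Set W} (hY : IsOpen Y)
    (L : W → W →L[ℝ] E) (P : W → W ≃L[ℝ] W) (J : W → ℝ)
    (hΓ : ∀ y ∈ Y, HasStrictFDerivAt Γ (L y) y) (hP : ∀ y ∈ Y, ∀ w, ‖P y w‖ = ‖L y w‖)
    (hJ : ∀ y ∈ Y, J y = |LinearMap.det (P y : W →ₗ[ℝ] W)|) (hJc : ContinuousOn J Y)
    (hJp : ∀ y ∈ Y, 0 < J y)
    (hinj : InjOn Γ Y) {A : Set W} (hA : MeasurableSet A) (hAY : A ⊆ Y) :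
    μH[(d : ℝ)] (Γ '' A) = ∫⁻ y in A, ENNReal.ofReal (J y) ∂μH[(d : ℝ)] := by
  have hΓc : ContinuousOn Γ Y := fun y hy => (hΓ y hy).hasFDerivAt.continuousAt.continuousWithinAt
  -- local
  have hloc : ∀ K : ℝ≥0, 1 < K → ∀ y ∈ Y, ∃ U ∈ 𝓝 y, IsOpen U ∧ ∀ B ⊆ U, MeasurableSet B →
      μH[(d : ℝ)] (Γ '' B) ≤ K ^ (d+1) * ∫⁻ y in B, ENNReal.ofReal (J y) ∂μH[(d : ℝ)] ∧
      ∫⁻ y in B, ENNReal.ofReal (J y) ∂μH[(d : ℝ)] ≤ K ^ (d+1) * μH[(d : ℝ)] (Γ '' B) := by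
    intro K hK y hy
    obtain ⟨U, hU, h⟩ := area_local hd (hΓ y hy) (P y) (hP y hy) K hK
    have hK' : (1 : ℝ) < K := by exact_mod_cast hK
    have hc := (hJc y hy).continuousAt (hY.mem_nhds hy)
    have hJy := hJp y hy
    have e1 : ∀ᶠ z in 𝓝 y, J z < K * J y := hc.eventually (gt_mem_nhds (by nlinarith))
    have e2 : ∀ᶠ z in 𝓝 y, (K:ℝ)⁻¹ * J y < J z := hc.eventually (lt_mem_nhds (by
      have : (K:ℝ)⁻¹ < 1 := inv_lt_one_of_one_lt₀ hK'
      nlinarith))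
    obtain ⟨V, hV, hVo, hyV⟩ := mem_nhds_iff.1 (inter_mem hU (e1.and e2))
    refine ⟨V, hVo.mem_nhds hyV, hVo, fun B hB hBm => ?_⟩
    obtain ⟨h1, h2⟩ := h B (fun z hz => (hV (hB hz)).1)
    rw [← hJ y hy] at h1 h2
    have hKr : ENNReal.ofReal (K:ℝ) = K := ENNReal.ofReal_coe_nnreal
    have i1 : ∫⁻ y in B, ENNReal.ofReal (J y) ∂μH[(d : ℝ)] ≤ K * (ENNReal.ofReal (J y) * μH[(d:ℝ)] B) := by
      calc _ ≤ ∫⁻ z in B, ENNReal.ofReal (K * J y) ∂μH[(d : ℝ)] :=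
            setLIntegral_mono' hBm fun z hz => ENNReal.ofReal_le_ofReal (hV (hB hz)).2.1.le
        _ = _ := by rw [setLIntegral_const, ENNReal.ofReal_mul (by positivity), hKr, mul_assoc]
    have i2 : (ENNReal.ofReal (J y) * μH[(d:ℝ)] B) ≤ K * ∫⁻ y in B, ENNReal.ofReal (J y) ∂μH[(d : ℝ)] := by
      calc _ = ∫⁻ z in B, ENNReal.ofReal (J y) ∂μH[(d : ℝ)] := by rw [setLIntegral_const]
        _ ≤ ∫⁻ z in B, K * ENNReal.ofReal (J z) ∂μH[(d : ℝ)] := by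
            refine setLIntegral_mono' hBm fun z hz => ?_
            rw [← hKr, ← ENNReal.ofReal_mul (by positivity)]
            refine ENNReal.ofReal_le_ofReal ?_
            have := (hV (hB hz)).2.2
            rw [inv_mul_lt_iff₀ (by linarith)] at this
            exact this.le
        _ = _ := by rw [lintegral_const_mul' _ _ ENNReal.coe_ne_top]
    constructor
    · calc _ ≤ _ := h1
        _ ≤ (K:ℝ≥0∞) ^ d * (K * ∫⁻ y in B, ENNReal.ofReal (J y) ∂μH[(d : ℝ)]) := by gcongr
        _ = _ := by ring
    · calc _ ≤ _ := i1
        _ ≤ (K:ℝ≥0∞) * (K ^ d * μH[(d : ℝ)] (Γ '' B)) := by gcongr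
        _ = _ := by ring
  -- global with K
  have hglob : ∀ K : ℝ≥0, 1 < K →
      μH[(d : ℝ)] (Γ '' A) ≤ K ^ (d+1) * ∫⁻ y in A, ENNReal.ofReal (J y) ∂μH[(d : ℝ)] ∧
      ∫⁻ y in A, ENNReal.ofReal (J y) ∂μH[(d : ℝ)] ≤ K ^ (d+1) * μH[(d : ℝ)] (Γ '' A) := by
    intro K hK
    choose! U hU hUo hUB using hloc K hK
    obtain ⟨t, htY, htc, hcov⟩ := TopologicalSpace.countable_cover_nhdsWithin
      (s := Y) (f := U) (fun y hy => mem_nhdsWithin_of_mem_nhds (hU y hy))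
    rcases t.eq_empty_or_nonempty with rfl | hne
    · have : A = ∅ := by
        refine subset_empty_iff.1 (hAY.trans ?_)
        simpa using hcov
      simp [this]
    obtain ⟨f, rfl⟩ := htc.exists_eq_range hne
    set B : ℕ → Set W := fun n => A ∩ disjointed (fun n => U (f n)) n with hB
    have hfY : ∀ n, f n ∈ Y := fun n => htY (mem_range_self n)
    have hBm : ∀ n, MeasurableSet (B n) := fun n =>
      hA.inter (MeasurableSet.disjointed (fun n => (hUo _ (hfY n)).measurableSet) n)
    have hBU : ∀ n, B n ⊆ U (f n) := fun n => inter_subset_right.trans (disjointed_subset _ n)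
    have hBd : Pairwise (Function.onFun Disjoint B) := fun i j hij =>
      ((disjoint_disjointed (fun n => U (f n))) hij).mono inter_subset_right inter_subset_right
    have hBA : A = ⋃ n, B n := by
      rw [hB, ← inter_iUnion, iUnion_disjointed, eq_comm, inter_eq_left]
      refine hAY.trans (hcov.trans ?_)
      simp
    have hBY : ∀ n, B n ⊆ Y := fun n => inter_subset_left.trans hAY
    have e1 : μH[(d : ℝ)] (Γ '' A) = ∑' n, μH[(d : ℝ)] (Γ '' (B n)) := by
      conv_lhs => rw [hBA, image_iUnion]
      refine measure_iUnion (fun i j hij => ?_) (fun n => ?_)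
      · exact (hBd hij).image hinj (hBY i) (hBY j)
      · exact (hBm n).image_of_continuousOn_injOn (hΓc.mono (hBY n)) (hinj.mono (hBY n))
    have e2 : ∫⁻ y in A, ENNReal.ofReal (J y) ∂μH[(d : ℝ)] =
        ∑' n, ∫⁻ y in B n, ENNReal.ofReal (J y) ∂μH[(d : ℝ)] := by
      conv_lhs => rw [hBA]
      exact lintegral_iUnion hBm hBd _
    rw [e1, e2, ← ENNReal.tsum_mul_left, ← ENNReal.tsum_mul_left]
    exact ⟨ENNReal.tsum_le_tsum fun n => (hUB _ (hfY n) _ (hBU n) (hBm n)).1,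
      ENNReal.tsum_le_tsum fun n => (hUB _ (hfY n) _ (hBU n) (hBm n)).2⟩
  have hlim : ∀ b : ℝ≥0∞, Tendsto (fun K : ℝ≥0 => (K : ℝ≥0∞) ^ (d+1) * b) (𝓝[>] 1) (𝓝 b) := by
    intro b
    have h1 : Tendsto (fun K : ℝ≥0 => (K : ℝ≥0∞) ^ (d+1)) (𝓝[>] 1) (𝓝 1) := by
      have : Continuous (fun K : ℝ≥0 => ((K ^ (d+1) : ℝ≥0) : ℝ≥0∞)) := by fun_prop
      have := this.tendsto 1
      simp only [one_pow, ENNReal.coe_one, ENNReal.coe_pow] at this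
      exact this.mono_left nhdsWithin_le_nhds
    simpa using ENNReal.Tendsto.mul_const h1 (Or.inl one_ne_zero)
  refine le_antisymm (ge_of_tendsto (hlim _) ?_) (ge_of_tendsto (hlim _) ?_)
  · filter_upwards [self_mem_nhdsWithin] with K hK using (hglob K hK).1
  · filter_upwards [self_mem_nhdsWithin] with K hK using (hglob K hK).2

end Area

end PartA

section PartB
set_option pp.mvars false
open MeasureTheory Set Filter Topology
open scoped NNReal ENNReal RealInnerProductSpace

section AreaInt
variable {W E : Type*} [NormedAddCommGroup W] [NormedSpace ℝ W] [FiniteDimensional ℝ W]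
  [MeasurableSpace W] [BorelSpace W]
  [NormedAddCommGroup E] [NormedSpace ℝ E] [MeasurableSpace E] [BorelSpace E]

theorem area_integral {d : ℕ} (hd : Module.finrank ℝ W = d) {Γ : W → E} {Y : Set W} (hY : IsOpen Y)
    (L : W → W →L[ℝ] E) (P : W → W ≃L[ℝ] W) (J : W → ℝ)
    (hΓ : ∀ y ∈ Y, HasStrictFDerivAt Γ (L y) y) (hP : ∀ y ∈ Y, ∀ w, ‖P y w‖ = ‖L y w‖)
    (hJ : ∀ y ∈ Y, J y = |LinearMap.det (P y : W →ₗ[ℝ] W)|) (hJc : ContinuousOn J Y)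
    (hJp : ∀ y ∈ Y, 0 < J y)
    (hinj : InjOn Γ Y) (f : E → ℝ) (hf : Measurable f) :
    ∫ x in Γ '' Y, f x ∂μH[(d : ℝ)] = ∫ y in Y, J y * f (Γ y) ∂μH[(d : ℝ)] := by
  classical
  have hΓc : ContinuousOn Γ Y := fun y hy => (hΓ y hy).hasFDerivAt.continuousAt.continuousWithinAt
  set Γ' : W → E := Y.piecewise Γ (fun _ => 0) with hΓ'
  have hm : Measurable Γ' := hΓc.measurable_piecewise continuousOn_const hY.measurableSet
  have he : ∀ y ∈ Y, Γ' y = Γ y := fun y hy => piecewise_eq_of_mem _ _ _ hy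
  have hmap : (μH[(d : ℝ)] : Measure E).restrict (Γ '' Y) =
      Measure.map Γ' (((μH[(d : ℝ)] : Measure W).restrict Y).withDensity
        (fun y => ENNReal.ofReal (J y))) := by
    ext B hB
    rw [Measure.map_apply hm hB, withDensity_apply _ (hm hB), Measure.restrict_apply hB,
      Measure.restrict_restrict (hm hB),
      ← area_formula hd hY L P J hΓ hP hJ hJc hJp hinj ((hm hB).inter hY.measurableSet)
        inter_subset_right]
    congr 1
    ext x
    constructor
    · rintro ⟨hx, y, hy, rfl⟩
      exact ⟨y, ⟨by simpa [he y hy] using hx, hy⟩, rfl⟩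
    · rintro ⟨y, ⟨hy1, hy⟩, rfl⟩
      exact ⟨by simpa [he y hy] using hy1, y, hy, rfl⟩
  rw [hmap, integral_map hm.aemeasurable hf.aestronglyMeasurable,
    integral_withDensity_eq_integral_toReal_smul₀
      (f := fun y => ENNReal.ofReal (J y))
      (ENNReal.measurable_ofReal.comp_aemeasurable (hJc.aemeasurable hY.measurableSet))
      (by filter_upwards with y using ENNReal.ofReal_lt_top)]
  refine setIntegral_congr_fun hY.measurableSet fun y hy => ?_
  simp only [he y hy, ENNReal.toReal_ofReal (hJp y hy).le, smul_eq_mul]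

end AreaInt

/-- Orthogonal splitting of `E` along a unit vector. -/
structure Split (W : Type*) {E : Type*} [NormedAddCommGroup W] [InnerProductSpace ℝ W]
    [NormedAddCommGroup E] [InnerProductSpace ℝ E] (v : E) where
  ι : W →ₗᵢ[ℝ] E
  π : E →L[ℝ] W
  hv : ‖v‖ = 1
  πι : ∀ w, π (ι w) = w
  πv : π v = 0
  dec : ∀ x, ι (π x) + ⟪v, x⟫ • v = x
  orth : ∀ w, ⟪v, ι w⟫ = 0

theorem graph_det {W : Type*} [NormedAddCommGroup W] [InnerProductSpace ℝ W]
    [FiniteDimensional ℝ W] (a : W) :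
    ∃ P : W ≃L[ℝ] W, (∀ w, ‖P w‖ ^ 2 = ‖w‖ ^ 2 + ⟪a, w⟫ ^ 2) ∧
      LinearMap.det (P : W →ₗ[ℝ] W) = Real.sqrt (1 + ‖a‖ ^ 2) := by
  set q := Real.sqrt (1 + ‖a‖ ^ 2) with hq
  have hq2 : q ^ 2 = 1 + ‖a‖ ^ 2 := Real.sq_sqrt (by positivity)
  have hq0 : 0 < q := Real.sqrt_pos.2 (by positivity)
  set c : ℝ := 1 / (1 + q) with hc
  have hc1 : c * (1 + q) = 1 := by rw [hc]; field_simp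
  let f : W →ₗ[ℝ] ℝ := (innerSL ℝ a : W →L[ℝ] ℝ)
  let p : W →ₗ[ℝ] W := LinearMap.transvection f (c • a)
  have hdet : LinearMap.det p = q := by
    rw [LinearMap.transvection.det]
    simp only [f, map_smul, ContinuousLinearMap.coe_coe, innerSL_apply_apply, real_inner_self_eq_norm_sq,
      smul_eq_mul]
    have : ‖a‖^2 = (q - 1) * (1 + q) := by linarith [hq2, sq q]
    rw [this]
    linear_combination (q - 1) * hc1
  have hp : ∀ w, p w = w + ⟪a, w⟫ • (c • a) := fun w => by
    simp [p, f, LinearMap.transvection.apply]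
  refine ⟨(p.equivOfDetNeZero (by rw [hdet]; exact hq0.ne')).toContinuousLinearEquiv, ?_, ?_⟩
  · intro w
    change ‖p w‖ ^ 2 = _
    rw [hp, norm_add_sq_real, inner_smul_right, inner_smul_right, norm_smul, norm_smul, mul_pow, mul_pow,
      Real.norm_eq_abs, Real.norm_eq_abs, sq_abs, sq_abs, real_inner_comm a w]
    have : ‖a‖^2 = (q - 1) * (1 + q) := by linarith [hq2, sq q]
    rw [this]
    linear_combination (⟪a, w⟫ ^ 2 * (1 + c * (q - 1))) * hc1
  · exact hdet

section Chart
variable {W E : Type*} [NormedAddCommGroup W] [InnerProductSpace ℝ W] [FiniteDimensional ℝ W]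
  [MeasurableSpace W] [BorelSpace W]
  [NormedAddCommGroup E] [InnerProductSpace ℝ E] [FiniteDimensional ℝ E]
  [MeasurableSpace E] [BorelSpace E]

/-- derivative of the chart map -/
noncomputable def Split.equiv {v : E} (S : Split W v) (g : E) (hg : ⟪g, v⟫ ≠ 0) : E ≃L[ℝ] (W × ℝ) :=
  ContinuousLinearEquiv.equivOfInverse (S.π.prod (innerSL ℝ g))
    (S.ι.toContinuousLinearMap.comp (ContinuousLinearMap.fst ℝ W ℝ) +
      ((⟪g, v⟫)⁻¹ • (ContinuousLinearMap.snd ℝ W ℝ -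
        (innerSL ℝ g).comp (S.ι.toContinuousLinearMap.comp (ContinuousLinearMap.fst ℝ W ℝ)))).smulRight v)
    (by
      intro x
      simp only [ContinuousLinearMap.prod_apply, innerSL_apply_apply, _root_.add_apply,
        ContinuousLinearMap.comp_apply, ContinuousLinearMap.coe_fst', ContinuousLinearMap.smulRight_apply,
        _root_.smul_apply, _root_.sub_apply, ContinuousLinearMap.coe_snd', LinearIsometry.coe_toContinuousLinearMap]
      have h := S.dec x
      have h2 : ⟪g, x⟫ - ⟪g, S.ι (S.π x)⟫ = ⟪v, x⟫ * ⟪g, v⟫ := by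
        nth_rewrite 1 [← h]
        rw [inner_add_right, inner_smul_right]; ring
      rw [h2, smul_eq_mul]
      conv_rhs => rw [← h]
      congr 2
      field_simp)
    (by
      rintro ⟨w, r⟩
      simp only [ContinuousLinearMap.prod_apply, innerSL_apply_apply, _root_.add_apply,
        ContinuousLinearMap.comp_apply, ContinuousLinearMap.coe_fst', ContinuousLinearMap.smulRight_apply,
        _root_.smul_apply, _root_.sub_apply, ContinuousLinearMap.coe_snd', LinearIsometry.coe_toContinuousLinearMap,
        smul_eq_mul]
      refine Prod.ext ?_ ?_
      · simp only [map_add, map_smul, S.πι, S.πv, smul_zero, add_zero]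
      · simp only [inner_add_right, inner_smul_right]
        field_simp
        ring)

theorem Split.equiv_coe {v : E} (S : Split W v) (g : E) (hg : ⟪g, v⟫ ≠ 0) :
    (S.equiv g hg : E →L[ℝ] W × ℝ) = S.π.prod (innerSL ℝ g) := rfl

theorem Split.equiv_symm {v : E} (S : Split W v) (g : E) (hg : ⟪g, v⟫ ≠ 0) (w : W) (r : ℝ) :
    (S.equiv g hg).symm (w, r) = S.ι w + ((⟪g, v⟫)⁻¹ * (r - ⟪g, S.ι w⟫)) • v := rfl

/-- a chart for `T` adapted to `v` -/
structure Chart (T : E → ℝ) (G : E → E) {v : E} (S : Split W v) where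
  e : OpenPartialHomeomorph E (W × ℝ)
  he : ∀ x, e x = (S.π x, T x)
  pos : ∀ x ∈ e.source, 0 < ⟪G x, v⟫

theorem Chart.exists {T : E → ℝ} {G : E → E} (hT : ContDiff ℝ 2 T) (hG : Continuous G)
    (hTG : ∀ x, HasFDerivAt T (innerSL ℝ (G x)) x) {v : E} (S : Split W v) (x₀ : E)
    (h0 : 0 < ⟪G x₀, v⟫) : ∃ c : Chart T G S, x₀ ∈ c.e.source := by
  have h1 : HasStrictFDerivAt (fun x => (S.π x, T x)) (S.equiv (G x₀) h0.ne' : E →L[ℝ] W × ℝ) x₀ := by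
    rw [Split.equiv_coe]
    refine S.π.hasStrictFDerivAt.prodMk ?_
    have := hT.contDiffAt.hasStrictFDerivAt (x := x₀) (by norm_num)
    rwa [(hTG x₀).fderiv] at this
  have ho : IsOpen {x | 0 < ⟪G x, v⟫} := isOpen_lt continuous_const (by fun_prop)
  refine ⟨⟨(h1.toOpenPartialHomeomorph _).restrOpen _ ho, fun x => rfl, ?_⟩, ?_⟩
  · intro x hx
    rw [OpenPartialHomeomorph.restrOpen_source] at hx
    exact hx.2
  · rw [OpenPartialHomeomorph.restrOpen_source]
    exact ⟨h1.mem_toOpenPartialHomeomorph_source, h0⟩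

variable {T : E → ℝ} {G : E → E} (hT : ContDiff ℝ 2 T) (hG : Continuous G)
    (hTG : ∀ x, HasFDerivAt T (innerSL ℝ (G x)) x) {v : E} {S : Split W v}

include hT hTG in
theorem Chart.strict (c : Chart T G S) {x : E} (hx : x ∈ c.e.source) :
    HasStrictFDerivAt c.e (S.equiv (G x) (c.pos x hx).ne' : E →L[ℝ] W × ℝ) x := by
  have : (c.e : E → W × ℝ) = fun x => (S.π x, T x) := funext c.he
  rw [this, Split.equiv_coe]
  refine S.π.hasStrictFDerivAt.prodMk ?_
  have := hT.contDiffAt.hasStrictFDerivAt (x := x) (by norm_num)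
  rwa [(hTG x).fderiv] at this

include hT hTG in
theorem Chart.strict_symm (c : Chart T G S) {z : W × ℝ} (hz : z ∈ c.e.target) :
    HasStrictFDerivAt c.e.symm ((S.equiv (G (c.e.symm z))
      (c.pos _ (c.e.map_target hz)).ne').symm : W × ℝ →L[ℝ] E) z :=
  c.e.hasStrictFDerivAt_symm hz (c.strict hT hTG (c.e.map_target hz))

include hT hTG in
theorem Chart.contDiffAt_symm (c : Chart T G S) {z : W × ℝ} (hz : z ∈ c.e.target) :
    ContDiffAt ℝ 1 c.e.symm z := by
  refine c.e.contDiffAt_symm hz (c.strict hT hTG (c.e.map_target hz)).hasFDerivAt ?_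
  have : (c.e : E → W × ℝ) = fun x => (S.π x, T x) := funext c.he
  rw [this]
  exact (S.π.contDiff.prodMk (hT.of_le (by norm_num))).contDiffAt

include hT hG hTG in
theorem Chart.integral {d : ℕ} (hd : Module.finrank ℝ W = d) (c : Chart T G S) (s : ℝ) (f : E → ℝ)
    (hf : Measurable f) :
    ∫ x in T ⁻¹' {s} ∩ c.e.source, f x * (⟪G x, v⟫ / ‖G x‖) ∂μH[(d : ℝ)] =
      ∫ y in {y | (y, s) ∈ c.e.target}, f (c.e.symm (y, s)) ∂μH[(d : ℝ)] := by
  set Y : Set W := {y | (y, s) ∈ c.e.target} with hYdef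
  have hY : IsOpen Y := c.e.open_target.preimage (by fun_prop : Continuous fun y : W => (y, s))
  set Γ : W → E := fun y => c.e.symm (y, s) with hΓdef
  have hΓsrc : ∀ y ∈ Y, Γ y ∈ c.e.source := fun y hy => c.e.map_target hy
  have himg : Γ '' Y = T ⁻¹' {s} ∩ c.e.source := by
    ext x
    constructor
    · rintro ⟨y, hy, rfl⟩
      refine ⟨?_, hΓsrc y hy⟩
      have := c.e.right_inv hy
      rw [c.he] at this
      exact (Prod.ext_iff.1 this).2
    · rintro ⟨hx, hxs⟩
      have h1 : c.e x = (S.π x, s) := by rw [c.he]; simpa using hx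
      refine ⟨S.π x, ?_, ?_⟩
      · rw [hYdef, mem_ofPred_eq, ← h1]; exact c.e.map_source hxs
      · simp only [hΓdef]; rw [← h1]; exact c.e.left_inv hxs
  have hinj : InjOn Γ Y := by
    intro y hy z hz h
    have := c.e.symm.injOn hy hz h
    exact (Prod.ext_iff.1 this).1
  set L : W → W →L[ℝ] E := fun y => fderiv ℝ Γ y with hL
  have hst : ∀ y ∈ Y, HasStrictFDerivAt Γ (L y) y ∧
      ∀ w, L y w = S.ι w + (-(⟪G (Γ y), S.ι w⟫ / ⟪G (Γ y), v⟫)) • v := by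
    intro y hy
    have h1 := (c.strict_symm hT hTG hy)
    have h2 : HasStrictFDerivAt (fun y : W => (y, s)) (ContinuousLinearMap.inl ℝ W ℝ) y :=
      by
      exact (hasStrictFDerivAt_id y).prodMk (hasStrictFDerivAt_const s y)
    have h3 := h1.comp y h2
    have h4 : fderiv ℝ Γ y = _ := h3.hasFDerivAt.fderiv
    refine ⟨by rw [hL]; simp only; rw [h4]; exact h3, fun w => ?_⟩
    rw [hL]; simp only; rw [h4]
    change (S.equiv (G (Γ y)) (c.pos _ (c.e.map_target hy)).ne').symm (w, 0) = _
    rw [Split.equiv_symm]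
    congr 2
    ring
  have hΓc : ContinuousOn Γ Y := fun y hy => (hst y hy).1.hasFDerivAt.continuousAt.continuousWithinAt
  set J : W → ℝ := fun y => ‖G (Γ y)‖ / ⟪G (Γ y), v⟫ with hJdef
  have hpos : ∀ y ∈ Y, 0 < ⟪G (Γ y), v⟫ := fun y hy => c.pos _ (hΓsrc y hy)
  have hGne : ∀ y ∈ Y, 0 < ‖G (Γ y)‖ := fun y hy => by
    rw [norm_pos_iff]; intro h
    have := hpos y hy
    rw [h, inner_zero_left] at this; exact lt_irrefl _ this
  have hPex : ∀ y : W, ∃ P : W ≃L[ℝ] W, y ∈ Y → (∀ w, ‖P w‖ = ‖L y w‖) ∧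
      J y = |LinearMap.det (P : W →ₗ[ℝ] W)| := by
    intro y
    by_cases hy : y ∈ Y
    swap
    · exact ⟨ContinuousLinearEquiv.refl ℝ W, fun h => absurd h hy⟩
    set g := G (Γ y) with hg
    have hp := hpos y hy
    rw [← hg] at hp
    have hin : ∀ w, ⟪S.π g, w⟫ = ⟪g, S.ι w⟫ := by
      intro w
      nth_rewrite 2 [← S.dec g]
      rw [inner_add_left, inner_smul_left, S.orth, mul_zero, add_zero, LinearIsometry.inner_map_map]
    have hng : ‖g‖ ^ 2 = ‖S.π g‖ ^ 2 + ⟪g, v⟫ ^ 2 := by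
      nth_rewrite 1 [← S.dec g]
      rw [norm_add_sq_real, inner_smul_right, real_inner_comm v, S.orth, norm_smul, S.hv,
        LinearIsometry.norm_map, real_inner_comm g, mul_one, Real.norm_eq_abs, sq_abs]
      ring
    obtain ⟨P, hP1, hP2⟩ := graph_det (-(⟪g, v⟫)⁻¹ • S.π g)
    refine ⟨P, fun _ => ⟨fun w => ?_, ?_⟩⟩
    · have : ‖P w‖ ^ 2 = ‖L y w‖ ^ 2 := by
        rw [hP1, (hst y hy).2, norm_add_sq_real, inner_smul_right, real_inner_comm v (S.ι w), S.orth, norm_smul, S.hv,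
          LinearIsometry.norm_map, mul_one, Real.norm_eq_abs, sq_abs, inner_smul_left, hin]
        simp only [conj_trivial, ← hg]
        ring
      exact (sq_eq_sq₀ (norm_nonneg _) (norm_nonneg _)).1 this
    · rw [hP2, abs_of_nonneg (Real.sqrt_nonneg _), hJdef]
      simp only
      rw [← hg, eq_comm, Real.sqrt_eq_iff_mul_self_eq_of_pos (div_pos (hGne y hy) hp), norm_smul, norm_neg,
        norm_inv, mul_pow, inv_pow, Real.norm_eq_abs, sq_abs]
      field_simp
      linarith
  choose P hP using hPex
  have hJc : ContinuousOn J Y := by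
    refine ContinuousOn.div ?_ ?_ (fun y hy => (hpos y hy).ne')
    · exact (hG.norm).comp_continuousOn hΓc
    · exact (by fun_prop : Continuous fun x => ⟪G x, v⟫).comp_continuousOn hΓc
  rw [← himg, area_integral hd hY L P J (fun y hy => (hst y hy).1) (fun y hy => (hP y hy).1)
    (fun y hy => (hP y hy).2) hJc (fun y hy => div_pos (hGne y hy) (hpos y hy)) hinj]
  · refine setIntegral_congr_fun hY.measurableSet fun y hy => ?_
    have := hpos y hy
    have := hGne y hy
    simp only [hJdef]
    field_simp
    rfl
  · refine hf.mul (Measurable.div ?_ ?_)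
    · exact (by fun_prop : Continuous fun x => ⟪G x, v⟫).measurable
    · exact hG.norm.measurable

end Chart

end PartB

section PartC
open MeasureTheory Set Filter Topology
open scoped NNReal ENNReal RealInnerProductSpace

section Deriv
variable {W E : Type*} [NormedAddCommGroup W] [InnerProductSpace ℝ W] [FiniteDimensional ℝ W]
  [MeasurableSpace W] [BorelSpace W]
  [NormedAddCommGroup E] [InnerProductSpace ℝ E] [FiniteDimensional ℝ E]
  [MeasurableSpace E] [BorelSpace E]

theorem hasDerivAt_integral_param {H : W × ℝ → ℝ} (hH : ContDiff ℝ 1 H) (hc : HasCompactSupport H)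
    (μ : Measure W) [IsFiniteMeasureOnCompacts μ] (t : ℝ) :
    HasDerivAt (fun s => ∫ y, H (y, s) ∂μ) (∫ y, fderiv ℝ H (y, t) (0, 1) ∂μ) t := by
  have hd := hH.continuous_fderiv (by norm_num)
  obtain ⟨C, hC⟩ : ∃ C, ∀ z, ‖fderiv ℝ H z‖ ≤ C := by
    obtain ⟨C, hC⟩ := hc.isCompact.exists_bound_of_continuousOn (f := fderiv ℝ H) hd.continuousOn
    refine ⟨max C 0, fun z => ?_⟩
    by_cases hz : z ∈ tsupport H
    · exact (hC z hz).trans (le_max_left _ _)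
    · have : fderiv ℝ H z = 0 := by
        by_contra h
        exact hz (support_fderiv_subset ℝ h)
      rw [this]
      exact (ContinuousLinearMap.opNorm_zero).le.trans (le_max_right _ _)
  set K : Set W := Prod.fst '' tsupport H with hK
  have hKc : IsCompact K := hc.isCompact.image continuous_fst
  have hz : ∀ y, y ∉ K → ∀ s, (y, s) ∉ tsupport H := fun y hy s h => hy ⟨_, h, rfl⟩
  refine (hasDerivAt_integral_of_dominated_loc_of_deriv_le (μ := μ) (s := univ)
    (F := fun s y => H (y, s)) (F' := fun s y => fderiv ℝ H (y, s) (0, 1))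
    (bound := K.indicator (fun _ => C * ‖((0 : W), (1 : ℝ))‖)) univ_mem ?_ ?_ ?_ ?_ ?_ ?_).2
  · filter_upwards with s
    exact (hH.continuous.comp (by fun_prop : Continuous fun y : W => (y, s))).aestronglyMeasurable
  · refine (hH.continuous.comp (by fun_prop : Continuous fun y : W => (y, t))).integrable_of_hasCompactSupport ?_
    refine HasCompactSupport.intro hKc fun y hy => ?_
    exact image_eq_zero_of_notMem_tsupport (f := H) (hz y hy t)
  · have : Continuous fun y : W => fderiv ℝ H (y, t) (0, 1) :=
      (hd.comp (by fun_prop : Continuous fun y : W => (y, t))).clm_apply continuous_const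
    exact this.aestronglyMeasurable
  · filter_upwards with y s _
    by_cases hy : y ∈ K
    · rw [indicator_of_mem hy]
      refine (ContinuousLinearMap.le_opNorm _ _).trans ?_
      gcongr
      exact hC _
    · rw [indicator_of_notMem hy]
      have : fderiv ℝ H (y, s) = 0 := by
        by_contra h
        exact hz y hy s (support_fderiv_subset ℝ h)
      simp [this]
  · rw [integrable_indicator_iff hKc.measurableSet]
    exact integrableOn_const hKc.measure_lt_top.ne
  · filter_upwards with y s _
    have h1 := (hH.differentiable (by norm_num) (y, s)).hasFDerivAt
    have h2 : HasDerivAt (fun s : ℝ => (y, s)) ((0 : W), (1 : ℝ)) s :=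
      (hasDerivAt_const s y).prodMk (hasDerivAt_id s)
    exact h1.comp_hasDerivAt s h2

/-- the derivative identity -/
def DId (d : ℕ) (T : E → ℝ) (G : E → E) (t : ℝ) (ψ : E → ℝ) (v : E) : Prop :=
  HasDerivAt (fun s => ∫ x in T ⁻¹' {s}, ψ x * (⟪G x, v⟫ / ‖G x‖) ∂μH[(d : ℝ)])
    (∫ x in T ⁻¹' {t}, fderiv ℝ ψ x v / ‖G x‖ ∂μH[(d : ℝ)]) t

theorem Chart.DId {d : ℕ} {T : E → ℝ} {G : E → E} (hT : ContDiff ℝ 2 T) (hG : Continuous G)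
    (hTG : ∀ x, HasFDerivAt T (innerSL ℝ (G x)) x) {v : E} {S : Split W v}
    (hd : Module.finrank ℝ W = d) (c : Chart T G S) {ψ : E → ℝ} (hψ : ContDiff ℝ 1 ψ)
    (hψc : HasCompactSupport ψ) (hsupp : tsupport ψ ⊆ c.e.source) (t : ℝ) :
    _root_.DId d T G t ψ v := by
  classical
  have haar : Measure.IsAddHaarMeasure (μH[(d : ℝ)] : Measure W) := by
    rw [← hd]; infer_instance
  set H : W × ℝ → ℝ := fun z => if z ∈ c.e.target then ψ (c.e.symm z) else 0 with hH
  set K : Set (W × ℝ) := c.e '' tsupport ψ with hK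
  have hKc : IsCompact K := hψc.isCompact.image_of_continuousOn (c.e.continuousOn.mono hsupp)
  have hKt : K ⊆ c.e.target := by
    rintro _ ⟨x, hx, rfl⟩; exact c.e.map_source (hsupp hx)
  have hH0 : ∀ z, z ∉ K → H z = 0 := by
    intro z hz
    simp only [hH]
    split_ifs with h
    · by_contra h0
      exact hz ⟨c.e.symm z, subset_tsupport _ h0, c.e.right_inv h⟩
    · rfl
  have hHc : HasCompactSupport H := HasCompactSupport.intro hKc hH0
  have hHt : ∀ z ∈ c.e.target, H =ᶠ[𝓝 z] fun z => ψ (c.e.symm z) := by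
    intro z hz
    filter_upwards [c.e.open_target.mem_nhds hz] with z' hz'
    simp [hH, hz']
  have hHn : ∀ z, z ∉ K → H =ᶠ[𝓝 z] fun z => 0 := by
    intro z hz
    filter_upwards [hKc.isClosed.isOpen_compl.mem_nhds hz] with z' hz' using hH0 z' hz'
  have hH1 : ContDiff ℝ 1 H := by
    rw [contDiff_iff_contDiffAt]
    intro z
    by_cases hz : z ∈ c.e.target
    · exact ((hψ.contDiffAt.comp z (c.contDiffAt_symm hT hTG hz))).congr_of_eventuallyEq (hHt z hz)
    · exact contDiffAt_const.congr_of_eventuallyEq (hHn z fun h => hz (hKt h))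
  have hder := hasDerivAt_integral_param hH1 hHc (μH[(d : ℝ)] : Measure W) t
  have hYm : ∀ s : ℝ, MeasurableSet {y : W | (y, s) ∈ c.e.target} := fun s =>
    (c.e.open_target.preimage (by fun_prop : Continuous fun y : W => (y, s))).measurableSet
  have hrestrict : ∀ (s : ℝ) (f : E → ℝ), (∀ x, x ∉ c.e.source → f x = 0) →
      ∫ x in T ⁻¹' {s}, f x ∂μH[(d : ℝ)] = ∫ x in T ⁻¹' {s} ∩ c.e.source, f x ∂μH[(d : ℝ)] := by
    intro s f hf
    refine (setIntegral_eq_of_subset_of_forall_diff_eq_zero (μ := (μH[(d : ℝ)] : Measure E)) (f := f)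
      (s := T ⁻¹' {s} ∩ c.e.source) (hT.continuous.measurable (measurableSet_singleton s)) inter_subset_left ?_)
    rintro x ⟨hx, hx'⟩
    exact hf x fun h => hx' ⟨hx, h⟩
  have e1 : (fun s => ∫ x in T ⁻¹' {s}, ψ x * (⟪G x, v⟫ / ‖G x‖) ∂μH[(d : ℝ)]) =
      fun s => ∫ y, H (y, s) ∂μH[(d : ℝ)] := by
    funext s
    rw [hrestrict s _ (fun x hx => by
      rw [image_eq_zero_of_notMem_tsupport (fun h => hx (hsupp h)), zero_mul]),
      c.integral hT hG hTG hd s ψ hψ.continuous.measurable, ← integral_indicator (hYm s)]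
    congr 1
  have e2 : ∫ x in T ⁻¹' {t}, fderiv ℝ ψ x v / ‖G x‖ ∂μH[(d : ℝ)] =
      ∫ y, fderiv ℝ H (y, t) (0, 1) ∂μH[(d : ℝ)] := by
    have hfd : ∀ x, x ∉ c.e.source → fderiv ℝ ψ x = 0 := fun x hx => by
      by_contra h
      exact hx (hsupp (support_fderiv_subset ℝ h))
    rw [hrestrict t _ (fun x hx => by rw [hfd x hx]; simp)]
    have hm : Measurable fun x => fderiv ℝ ψ x v / ⟪G x, v⟫ := by
      refine Measurable.div ?_ ?_
      · exact ((hψ.continuous_fderiv (by norm_num)).clm_apply continuous_const).measurable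
      · exact (by fun_prop : Continuous fun x => ⟪G x, v⟫).measurable
    have := c.integral hT hG hTG hd t _ hm
    have hsm : MeasurableSet (T ⁻¹' {t} ∩ c.e.source) :=
      (hT.continuous.measurable (measurableSet_singleton t)).inter c.e.open_source.measurableSet
    rw [setIntegral_congr_fun hsm (g := fun x => fderiv ℝ ψ x v / ⟪G x, v⟫ * (⟪G x, v⟫ / ‖G x‖)),
      this, ← integral_indicator (hYm t)]
    · congr 1
      funext y
      by_cases hy : (y, t) ∈ c.e.target
      · rw [indicator_of_mem (by exact hy), (hHt _ hy).fderiv_eq]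
        have h1 := (hψ.differentiable (by norm_num) (c.e.symm (y, t))).hasFDerivAt
        have h2 := (h1.comp (y, t) (c.strict_symm hT hTG hy).hasFDerivAt).fderiv
        simp only [Function.comp_def] at h2
        rw [h2]
        change _ = fderiv ℝ ψ _ ((S.equiv (G (c.e.symm (y, t)))
          (c.pos _ (c.e.map_target hy)).ne').symm (0, 1))
        rw [Split.equiv_symm]
        simp only [map_zero, zero_add, inner_zero_right, sub_zero, mul_one, map_smul, smul_eq_mul]
        ring
      · rw [indicator_of_notMem (by exact hy), (hHn _ fun h => hy (hKt h)).fderiv_eq]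
        simp
    · intro x hx
      have := c.pos x hx.2
      simp only
      field_simp
  unfold _root_.DId
  rw [e1, e2]
  exact hder

end Deriv

end PartC

section PartD
open MeasureTheory Set Filter Topology
open scoped NNReal ENNReal RealInnerProductSpace

section Glob
variable {E : Type*} 
  [NormedAddCommGroup E] [InnerProductSpace ℝ E] [FiniteDimensional ℝ E]

noncomputable def mkSplit (v : E) (hv : ‖v‖ = 1) : Split ((Submodule.span ℝ {v})ᗮ : Submodule ℝ E) v where
  ι := (Submodule.span ℝ {v})ᗮ.subtypeₗᵢ
  π := (Submodule.span ℝ {v})ᗮ.orthogonalProjectionOnto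
  hv := hv
  πι := fun w => by simp
  πv := Submodule.orthogonalProjectionOnto_orthogonalComplement_singleton_eq_zero v
  dec := fun x => by
    have h := Submodule.starProjection_add_starProjection_orthogonal (K := Submodule.span ℝ {v}) x
    rw [Submodule.starProjection_unit_singleton ℝ hv] at h
    rw [add_comm] at h
    exact h
  orth := fun w => by
    exact (Submodule.mem_orthogonal_singleton_iff_inner_right.1 w.2)

theorem finrank_perp {d : ℕ} (hd : Module.finrank ℝ E = d + 1) (v : E) (hv : ‖v‖ = 1) :
    Module.finrank ℝ ((Submodule.span ℝ {v})ᗮ : Submodule ℝ E) = d := by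
  haveI : Fact (Module.finrank ℝ E = d + 1) := ⟨hd⟩
  exact Submodule.finrank_orthogonal_span_singleton (by rintro rfl; simp at hv)

variable [MeasurableSpace E] [BorelSpace E]

structure Good (G : E → E) (ψ : E → ℝ) : Prop where
  c1 : ContDiff ℝ 1 ψ
  cs : HasCompactSupport ψ
  ne : ∀ x ∈ tsupport ψ, G x ≠ 0

theorem Good.add {G : E → E} {ψ₁ ψ₂ : E → ℝ} (h₁ : Good G ψ₁) (h₂ : Good G ψ₂) :
    Good G (fun x => ψ₁ x + ψ₂ x) where
  c1 := h₁.c1.add h₂.c1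
  cs := h₁.cs.add h₂.cs
  ne := fun x hx => by
    rcases tsupport_add ψ₁ ψ₂ hx with h | h
    · exact h₁.ne x h
    · exact h₂.ne x h

theorem Good.mul {G : E → E} {ψ₁ η : E → ℝ} (h₁ : Good G ψ₁) (h₂ : ContDiff ℝ 1 η) :
    Good G (fun x => ψ₁ x * η x) where
  c1 := h₁.c1.mul h₂
  cs := h₁.cs.mul_right
  ne := fun x hx => h₁.ne x (tsupport_mul_subset_left hx)

theorem Good.int1 {d : ℕ} {T : E → ℝ} {G : E → E} (hT : Continuous T) (hG : Continuous G)
    {ψ : E → ℝ} (h : Good G ψ) (v : E) {s : ℝ} (hs : μH[(d : ℝ)] (T ⁻¹' {s}) < ∞) :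
    IntegrableOn (fun x => ψ x * (⟪G x, v⟫ / ‖G x‖)) (T ⁻¹' {s}) μH[(d : ℝ)] := by
  obtain ⟨C, hC⟩ := h.c1.continuous.bounded_above_of_compact_support h.cs
  refine Measure.integrableOn_of_bounded (M := C * ‖v‖) hs.ne ?_ ?_
  · refine (Measurable.mul h.c1.continuous.measurable (Measurable.div ?_ ?_)).aestronglyMeasurable
    · exact (by fun_prop : Continuous fun x => ⟪G x, v⟫).measurable
    · exact hG.norm.measurable
  · filter_upwards with x
    rw [norm_mul]
    refine mul_le_mul (hC x) ?_ (norm_nonneg _) ((norm_nonneg _).trans (hC x))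
    rw [norm_div, norm_norm]
    refine div_le_of_le_mul₀ (norm_nonneg _) (norm_nonneg _) ?_
    rw [mul_comm]
    exact norm_inner_le_norm _ _

theorem Good.int2 {d : ℕ} {T : E → ℝ} {G : E → E} (hT : Continuous T) (hG : Continuous G)
    {ψ : E → ℝ} (h : Good G ψ) (v : E) {s : ℝ} (hs : μH[(d : ℝ)] (T ⁻¹' {s}) < ∞) :
    IntegrableOn (fun x => fderiv ℝ ψ x v / ‖G x‖) (T ⁻¹' {s}) μH[(d : ℝ)] := by
  have hc := (h.c1.continuous_fderiv (by norm_num)).clm_apply (continuous_const (y := v))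
  obtain ⟨C, hC⟩ := h.cs.isCompact.exists_bound_of_continuousOn (f := fun x => fderiv ℝ ψ x v / ‖G x‖)
    (hc.continuousOn.div hG.norm.continuousOn fun x hx => norm_ne_zero_iff.2 (h.ne x hx))
  refine Measure.integrableOn_of_bounded (M := max C 0) hs.ne ?_ ?_
  · exact (hc.measurable.div hG.norm.measurable).aestronglyMeasurable
  · filter_upwards with x
    by_cases hz : x ∈ tsupport ψ
    · exact (hC x hz).trans (le_max_left _ _)
    · have : fderiv ℝ ψ x = 0 := by
        by_contra h
        exact hz (support_fderiv_subset ℝ h)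
      rw [this]; simp

section
variable {d : ℕ} {T : E → ℝ} {G : E → E} {t : ℝ}

theorem DId.add_v (hT : Continuous T) (hG : Continuous G)
    (hfin : ∀ᶠ s in 𝓝 t, μH[(d : ℝ)] (T ⁻¹' {s}) < ∞) {ψ : E → ℝ} (h : Good G ψ) {v w : E}
    (hv : DId d T G t ψ v) (hw : DId d T G t ψ w) : DId d T G t ψ (v + w) := by
  have := HasDerivAt.add hv hw
  unfold DId
  rw [← integral_add (h.int2 hT hG v hfin.self_of_nhds) (h.int2 hT hG w hfin.self_of_nhds)] at this
  refine (this.congr_of_eventuallyEq ?_).congr_deriv ?_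
  rotate_left
  · congr 1; funext x; rw [map_add, add_div]
  · filter_upwards [hfin] with s hs
    rw [Pi.add_apply, ← integral_add (h.int1 hT hG v hs) (h.int1 hT hG w hs)]
    congr 1
    funext x
    rw [inner_add_right, add_div, mul_add]

theorem DId.add_ψ (hT : Continuous T) (hG : Continuous G)
    (hfin : ∀ᶠ s in 𝓝 t, μH[(d : ℝ)] (T ⁻¹' {s}) < ∞) {ψ φ : E → ℝ} (h : Good G ψ) (h' : Good G φ) {v : E}
    (hv : DId d T G t ψ v) (hw : DId d T G t φ v) : DId d T G t (fun x => ψ x + φ x) v := by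
  have := HasDerivAt.add hv hw
  unfold DId
  rw [← integral_add (h.int2 hT hG v hfin.self_of_nhds) (h'.int2 hT hG v hfin.self_of_nhds)] at this
  refine (this.congr_of_eventuallyEq ?_).congr_deriv ?_
  rotate_left
  · congr 1
    funext x
    rw [fderiv_fun_add (h.c1.differentiable (by norm_num) x) (h'.c1.differentiable (by norm_num) x),
      _root_.add_apply, add_div]
  · filter_upwards [hfin] with s hs
    rw [Pi.add_apply, ← integral_add (h.int1 hT hG v hs) (h'.int1 hT hG v hs)]
    congr 1
    funext x
    ring

theorem DId.smul_v {ψ : E → ℝ} {v : E} (c : ℝ)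
    (hv : DId d T G t ψ v) : DId d T G t ψ (c • v) := by
  have := HasDerivAt.const_mul c hv
  unfold DId
  rw [← integral_const_mul] at this
  refine (this.congr_of_eventuallyEq (Eventually.of_forall fun s => ?_)).congr_deriv ?_
  · simp only
    rw [← integral_const_mul]
    congr 1
    funext x
    rw [inner_smul_right]; ring
  · congr 1
    funext x
    rw [map_smul, smul_eq_mul]; ring

theorem DId.local_pos (hT : ContDiff ℝ 2 T) (hG : Continuous G)
    (hTG : ∀ x, HasFDerivAt T (innerSL ℝ (G x)) x) (hd : Module.finrank ℝ E = d + 1) (x₀ v : E)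
    (h0 : 0 < ⟪G x₀, v⟫) :
    ∃ U ∈ 𝓝 x₀, ∀ ψ, Good G ψ → tsupport ψ ⊆ U → DId d T G t ψ v := by
  have hv : v ≠ 0 := by rintro rfl; simp at h0
  have hv' : 0 < ‖v‖ := norm_pos_iff.2 hv
  set u := ‖v‖⁻¹ • v with hu
  have hun : ‖u‖ = 1 := by rw [hu, norm_smul, norm_inv, norm_norm]; field_simp
  have hvu : v = ‖v‖ • u := by rw [hu, smul_smul, mul_inv_cancel₀ hv'.ne', one_smul]
  obtain ⟨c, hc⟩ := Chart.exists hT hG hTG (mkSplit u hun) x₀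
    (by rw [hu, inner_smul_right]; positivity)
  refine ⟨c.e.source, c.e.open_source.mem_nhds hc, fun ψ hψ hs => ?_⟩
  rw [hvu]
  exact (c.DId hT hG hTG (finrank_perp hd u hun) hψ.c1 hψ.cs hs t).smul_v _

theorem DId.local (hT : ContDiff ℝ 2 T) (hG : Continuous G)
    (hTG : ∀ x, HasFDerivAt T (innerSL ℝ (G x)) x) (hd : Module.finrank ℝ E = d + 1)
    (hfin : ∀ᶠ s in 𝓝 t, μH[(d : ℝ)] (T ⁻¹' {s}) < ∞) (x₀ v : E)
    (h0 : G x₀ ≠ 0) :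
    ∃ U ∈ 𝓝 x₀, ∀ ψ, Good G ψ → tsupport ψ ⊆ U → DId d T G t ψ v := by
  set N := G x₀ with hN
  have hN' : 0 < ‖N‖ := norm_pos_iff.2 h0
  set c := (|⟪N, v⟫| + 1) / ‖N‖ ^ 2 with hc
  have hc' : 0 < c := by positivity
  obtain ⟨U, hU, h1⟩ := DId.local_pos (t := t) hT hG hTG hd x₀ (v + c • N) (by
    rw [inner_add_right, inner_smul_right, ← hN, real_inner_self_eq_norm_sq, hc, div_mul_cancel₀ _ (by positivity)]
    linarith [neg_abs_le ⟪N, v⟫])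
  obtain ⟨U', hU', h1'⟩ := DId.local_pos (t := t) hT hG hTG hd x₀ (c • N) (by
    rw [inner_smul_right, ← hN, real_inner_self_eq_norm_sq]
    positivity)
  refine ⟨U ∩ U', inter_mem hU hU', fun ψ hψ hs => ?_⟩
  have := DId.add_v hT.continuous hG hfin hψ (h1 ψ hψ (hs.trans inter_subset_left))
    ((h1' ψ hψ (hs.trans inter_subset_right)).smul_v (-1))
  simpa using this

theorem DId.global (hT : ContDiff ℝ 2 T) (hG : Continuous G)
    (hTG : ∀ x, HasFDerivAt T (innerSL ℝ (G x)) x) (hd : Module.finrank ℝ E = d + 1)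
    (hfin : ∀ᶠ s in 𝓝 t, μH[(d : ℝ)] (T ⁻¹' {s}) < ∞) (v : E) (ψ : E → ℝ) (hψ : Good G ψ) :
    DId d T G t ψ v := by
  have key : ∃ η : E → ℝ, ContDiff ℝ 1 η ∧ (∀ x ∈ tsupport ψ, η x = 1) ∧
      ∀ ψ', Good G ψ' → DId d T G t (fun x => ψ' x * η x) v := by
    refine hψ.cs.isCompact.induction_on (p := fun s => ∃ η : E → ℝ, ContDiff ℝ 1 η ∧ (∀ x ∈ s, η x = 1) ∧
      ∀ ψ', Good G ψ' → DId d T G t (fun x => ψ' x * η x) v) ?_ ?_ ?_ ?_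
    · refine ⟨fun _ => 0, contDiff_const, by simp, fun ψ' _ => ?_⟩
      unfold DId
      simp [hasDerivAt_const]
    · rintro s s' hss ⟨η, h1, h2, h3⟩
      exact ⟨η, h1, fun x hx => h2 x (hss hx), h3⟩
    · rintro s s' ⟨η, h1, h2, h3⟩ ⟨η', h1', h2', h3'⟩
      refine ⟨fun x => η x + (1 - η x) * η' x, h1.add ((contDiff_const.sub h1).mul h1'), ?_, ?_⟩
      · rintro x (hx | hx)
        · simp only; rw [h2 x hx]; ring
        · simp only; rw [h2' x hx]; ring
      · intro ψ' hψ'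
        have g2 : Good G (fun x => ψ' x * (1 - η x)) := hψ'.mul (contDiff_const.sub h1)
        have := DId.add_ψ hT.continuous hG hfin (hψ'.mul h1) (g2.mul h1') (h3 ψ' hψ') (h3' _ g2)
        convert this using 2
        ring
    · intro x hx
      obtain ⟨U, hU, h⟩ := DId.local hT hG hTG hd hfin x v (hψ.ne x hx)
      obtain ⟨r, hr, hrU⟩ := Metric.nhds_basis_closedBall.mem_iff.1 hU
      let f : ContDiffBump x := ⟨r / 2, r, by positivity, by linarith⟩
      refine ⟨Metric.closedBall x (r / 2), mem_nhdsWithin_of_mem_nhds (Metric.closedBall_mem_nhds _ (by positivity)),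
        f, f.contDiff, fun y hy => f.one_of_mem_closedBall hy, fun ψ' hψ' => h _ (hψ'.mul f.contDiff) ?_⟩
      refine (tsupport_mul_subset_right).trans ?_
      rw [f.tsupport_eq]
      exact hrU
  obtain ⟨η, -, h2, h3⟩ := key
  have := h3 ψ hψ
  convert this using 2 with x
  by_cases hx : x ∈ tsupport ψ
  · simp [h2 x hx]
  · simp [image_eq_zero_of_notMem_tsupport hx]

end
end Glob

end PartD

section PartF
open MeasureTheory Set Filter Topology
open scoped NNReal ENNReal RealInnerProductSpace

section Assemble
variable {E : Type*} 
  [NormedAddCommGroup E] [InnerProductSpace ℝ E] [FiniteDimensional ℝ E]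

theorem exists_cut {K U : Set E} (hK : IsCompact K) (hU : IsOpen U) (hKU : K ⊆ U) :
    ∃ (V : Set E) (η : E → ℝ), IsOpen V ∧ K ⊆ V ∧ ContDiff ℝ 1 η ∧ HasCompactSupport η ∧ tsupport η ⊆ U ∧
      ∀ x ∈ V, η x = 1 := by
  refine hK.induction_on (p := fun s => ∃ (V : Set E) (η : E → ℝ), IsOpen V ∧ s ⊆ V ∧ ContDiff ℝ 1 η ∧ HasCompactSupport η ∧ tsupport η ⊆ U ∧
      ∀ x ∈ V, η x = 1) ?_ ?_ ?_ ?_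
  · refine ⟨∅, fun _ => 0, isOpen_empty, subset_rfl, contDiff_const, HasCompactSupport.zero, ?_, by simp⟩
    have : tsupport (fun _ : E => (0 : ℝ)) = ∅ := tsupport_eq_empty_iff.2 rfl
    rw [this]; exact empty_subset _
  · rintro s s' h ⟨V, η, h1, h2, h3⟩
    exact ⟨V, η, h1, h.trans h2, h3⟩
  · rintro s s' ⟨V, η, h1, h2, h3, h4, h5, h6⟩ ⟨V', η', h1', h2', h3', h4', h5', h6'⟩
    refine ⟨V ∪ V', fun x => η x + (1 - η x) * η' x, h1.union h1', union_subset_union h2 h2',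
      h3.add ((contDiff_const.sub h3).mul h3'), h4.add h4'.mul_left, ?_, ?_⟩
    · refine (tsupport_add _ _).trans (union_subset h5 (tsupport_mul_subset_right.trans h5'))
    · rintro x (hx | hx)
      · simp only; rw [h6 x hx]; ring
      · simp only; rw [h6' x hx]; ring
  · intro x hx
    obtain ⟨r, hr, hrU⟩ := Metric.nhds_basis_closedBall.mem_iff.1 (hU.mem_nhds (hKU hx))
    let f : ContDiffBump x := ⟨r / 2, r, by positivity, by linarith⟩
    refine ⟨Metric.ball x (r / 2), mem_nhdsWithin_of_mem_nhds (Metric.ball_mem_nhds _ (by positivity)),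
      Metric.ball x (r / 2), f, Metric.isOpen_ball, subset_rfl, f.contDiff, f.hasCompactSupport, ?_, 
      fun y hy => f.one_of_mem_closedBall (Metric.ball_subset_closedBall hy)⟩
    rw [f.tsupport_eq]; exact hrU

theorem unit_lip (e g g' : E) (he : ‖e‖ = 1) (hg : g ≠ 0) :
    |⟪g', e⟫ / ‖g'‖ - ⟪g, e⟫ / ‖g‖| ≤ 2 / ‖g‖ * ‖g' - g‖ := by
  have hn : 0 < ‖g‖ := norm_pos_iff.2 hg
  have h1 : |⟪g', e⟫| ≤ ‖g'‖ := by simpa [he] using abs_real_inner_le_norm g' e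
  have h2 : |⟪g', e⟫ - ⟪g, e⟫| ≤ ‖g' - g‖ := by
    rw [← inner_sub_left]; simpa [he] using abs_real_inner_le_norm (g' - g) e
  have h3 : |‖g'‖ - ‖g‖| ≤ ‖g' - g‖ := abs_norm_sub_norm_le g' g
  have h4 : |⟪g', e⟫ / ‖g'‖| ≤ 1 := by
    rw [abs_div, abs_norm]
    exact div_le_one_of_le₀ h1 (norm_nonneg _)
  have h5 : ⟪g', e⟫ / ‖g'‖ - ⟪g, e⟫ / ‖g‖ = ((⟪g', e⟫ - ⟪g, e⟫) - ⟪g', e⟫ / ‖g'‖ * (‖g'‖ - ‖g‖)) / ‖g‖ := by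
    rcases eq_or_ne g' 0 with rfl | h0
    · simp
      ring
    · have : ‖g'‖ ≠ 0 := norm_ne_zero_iff.2 h0
      field_simp
      ring
  rw [h5, abs_div, abs_norm, div_mul_eq_mul_div (2 : ℝ)]
  refine div_le_div_of_nonneg_right ?_ hn.le
  calc _ ≤ |⟪g', e⟫ - ⟪g, e⟫| + |⟪g', e⟫ / ‖g'‖ * (‖g'‖ - ‖g‖)| := abs_sub _ _
    _ ≤ ‖g' - g‖ + 1 * ‖g' - g‖ := by
        rw [abs_mul]
        gcongr
    _ = _ := by ring

theorem unit_contDiffAt (e g : E) (hg : g ≠ 0) : ContDiffAt ℝ 1 (fun g : E => ⟪g, e⟫ / ‖g‖) g :=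
  (contDiffAt_id.inner ℝ contDiffAt_const).div (contDiffAt_norm ℝ hg) (norm_ne_zero_iff.2 hg)

theorem unit_fderiv (e g : E) (he : ‖e‖ = 1) (hg : g ≠ 0) :
    ‖fderiv ℝ (fun g : E => ⟪g, e⟫ / ‖g‖) g‖ ≤ 2 / ‖g‖ :=
  norm_fderiv_le_of_lip' ℝ (by positivity) (Eventually.of_forall fun g' => unit_lip e g g' he hg)

variable [MeasurableSpace E] [BorelSpace E]

theorem main_deriv {d : ℕ} {T : E → ℝ} {G : E → E} {t : ℝ} (hT : ContDiff ℝ 2 T) (hG : ContDiff ℝ 1 G)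
    (hTG : ∀ x, HasFDerivAt T (innerSL ℝ (G x)) x) (hd : Module.finrank ℝ E = d + 1)
    (hfin : ∀ᶠ s in 𝓝 t, μH[(d : ℝ)] (T ⁻¹' {s}) < ∞) {δ : ℝ} (hδ : 0 < δ)
    (hcomp : IsCompact (T ⁻¹' Icc (t - δ) (t + δ))) (hne : ∀ x ∈ T ⁻¹' {t}, G x ≠ 0)
    {M : ℝ} (hM : ∀ x ∈ T ⁻¹' {t}, ‖fderiv ℝ G x‖ ≤ M) :
    ∃ D, HasDerivAt (fun s => (μH[(d : ℝ)] (T ⁻¹' {s})).toReal) D t ∧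
      |D| ≤ (d + 1) * ∫ x in T ⁻¹' {t}, 2 * M / ‖G x‖ ^ 2 ∂μH[(d : ℝ)] := by
  have hTc := hT.continuous
  have hGc := hG.continuous
  have hSc : IsCompact (T ⁻¹' {t}) :=
    hcomp.of_isClosed_subset (isClosed_singleton.preimage hTc) (preimage_mono (by
      rintro _ rfl; constructor <;> linarith))
  have hU : IsOpen {x | G x ≠ 0} := isOpen_ne_fun hGc continuous_const
  obtain ⟨V, ζ, hV, hSV, hζ, hζc, hζs, hζ1⟩ := exists_cut hSc hU hne
  have hev : ∀ᶠ s in 𝓝 t, T ⁻¹' {s} ⊆ V := by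
    have h1 : IsCompact (T ⁻¹' Icc (t - δ) (t + δ) \ V) := hcomp.diff hV
    have h2 := (h1.image hTc).isClosed.isOpen_compl.mem_nhds (x := t) (by
      rintro ⟨x, ⟨-, hx⟩, hxt⟩; exact hx (hSV hxt))
    filter_upwards [h2, Icc_mem_nhds (by linarith : t - δ < t) (by linarith : t < t + δ)] with s hs hs'
    intro x hx
    by_contra hxV
    exact hs ⟨x, ⟨by rw [mem_preimage, show T x = s from hx]; exact hs', hxV⟩, hx⟩
  let b := stdOrthonormalBasis ℝ E
  set ψ : Fin (Module.finrank ℝ E) → E → ℝ := fun i x => ζ x * (⟪G x, b i⟫ / ‖G x‖) with hψ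
  have hcd : ∀ i x, G x ≠ 0 → ContDiffAt ℝ 1 (fun x => ⟪G x, b i⟫ / ‖G x‖) x := fun i x hx =>
    (unit_contDiffAt (b i) (G x) hx).comp x hG.contDiffAt
  have hgood : ∀ i, Good G (ψ i) := by
    intro i
    refine ⟨?_, hζc.mul_right, fun x hx => hζs (tsupport_mul_subset_left hx)⟩
    rw [contDiff_iff_contDiffAt]
    intro x
    by_cases hx : x ∈ tsupport ζ
    · exact hζ.contDiffAt.mul (hcd i x (hζs hx))
    · refine contDiffAt_const (c := (0 : ℝ)) |>.congr_of_eventuallyEq ?_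
      filter_upwards [(isClosed_tsupport ζ).isOpen_compl.mem_nhds hx] with y hy
      simp [hψ, image_eq_zero_of_notMem_tsupport hy]
  have hDi := fun i => DId.global hT hGc hTG hd hfin (b i) (ψ i) (hgood i)
  have hsum := HasDerivAt.fun_sum (u := Finset.univ) (fun i _ => hDi i)
  refine ⟨_, hsum.congr_of_eventuallyEq ?_, ?_⟩
  · filter_upwards [hfin, hev] with s hs hsV
    rw [← integral_finset_sum _ (fun i _ => (hgood i).int1 hTc hGc (b i) hs)]
    rw [setIntegral_congr_fun (g := fun _ => (1 : ℝ)) (hTc.measurable (measurableSet_singleton s))]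
    · simp [Measure.real]
    · intro x hx
      have hxV := hsV hx
      have h0 : G x ≠ 0 := hζs (subset_tsupport _ (by simp [hζ1 x hxV]))
      have h0' : ‖G x‖ ≠ 0 := norm_ne_zero_iff.2 h0
      have h1 := b.sum_sq_norm_inner_left (G x)
      simp only [hψ, hζ1 x hxV, one_mul]
      simp only [← sq, div_pow, ← Finset.sum_div]
      simp only [Real.norm_eq_abs, sq_abs] at h1
      rw [h1]
      exact div_self (by positivity)
  · refine (Finset.abs_sum_le_sum_abs _ _).trans ?_
    have hb : ∀ i ∈ (Finset.univ : Finset (Fin (Module.finrank ℝ E))), 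
        |∫ x in T ⁻¹' {t}, fderiv ℝ (ψ i) x (b i) / ‖G x‖ ∂μH[(d : ℝ)]| ≤ 
          ∫ x in T ⁻¹' {t}, 2 * M / ‖G x‖ ^ 2 ∂μH[(d : ℝ)] := by
      intro i _
      refine norm_integral_le_of_norm_le (f := fun x => fderiv ℝ (ψ i) x (b i) / ‖G x‖) ?_ ?_
      · have hc : ContinuousOn (fun x => 2 * M / ‖G x‖ ^ 2) (T ⁻¹' {t}) :=
          continuousOn_const.div (hGc.norm.pow 2).continuousOn 
            (fun x hx => pow_ne_zero _ (norm_ne_zero_iff.2 (hne x hx)))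
        obtain ⟨C, hC⟩ := hSc.exists_bound_of_continuousOn hc
        refine Measure.integrableOn_of_bounded (M := C) hfin.self_of_nhds.ne ?_ ?_
        · exact (measurable_const.div (hGc.norm.pow 2).measurable).aestronglyMeasurable
        · exact (ae_restrict_iff' (hTc.measurable (measurableSet_singleton t))).2 (Eventually.of_forall hC)
      · refine (ae_restrict_iff' (hTc.measurable (measurableSet_singleton t))).2 (Eventually.of_forall fun x hx => ?_)
        have h0 := hne x hx
        have hn : 0 < ‖G x‖ := norm_pos_iff.2 h0
        have he : ψ i =ᶠ[𝓝 x] (fun g => ⟪g, b i⟫ / ‖g‖) ∘ G := by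
          filter_upwards [hV.mem_nhds (hSV hx)] with y hy
          simp [hψ, hζ1 y hy]
        rw [he.fderiv_eq, fderiv_comp x ((unit_contDiffAt (b i) (G x) h0).differentiableAt (by norm_num))
          (hG.differentiable (by norm_num) x), norm_div, norm_norm, ContinuousLinearMap.comp_apply]
        have h1 := unit_fderiv (b i) (G x) (b.norm_eq_one i) h0
        have h2 : ‖fderiv ℝ G x (b i)‖ ≤ M := by
          have := (fderiv ℝ G x).le_opNorm (b i)
          rw [b.norm_eq_one i, mul_one] at this
          exact this.trans (hM x hx)
        have h3 : ‖fderiv ℝ (fun g : E => ⟪g, b i⟫ / ‖g‖) (G x) (fderiv ℝ G x (b i))‖ ≤ 2 / ‖G x‖ * M :=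
          (ContinuousLinearMap.le_opNorm _ _).trans (mul_le_mul h1 h2 (norm_nonneg _) (by positivity))
        calc _ ≤ (2 / ‖G x‖ * M) / ‖G x‖ := by gcongr
          _ = _ := by field_simp
    refine (Finset.sum_le_sum hb).trans ?_
    rw [Finset.sum_const, Finset.card_univ, Fintype.card_fin, hd, nsmul_eq_mul]
    push_cast
    exact le_rfl

end Assemble

end PartF

section PartH
open MeasureTheory Set Filter Topology
open scoped NNReal ENNReal RealInnerProductSpace

section Bounds
variable {E : Type*} 
  [NormedAddCommGroup E] [InnerProductSpace ℝ E] [FiniteDimensional ℝ E]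

theorem exists_lip {G : E → E} (hG : ContDiff ℝ 1 G) (R : ℝ) :
    ∃ M : ℝ, 0 < M ∧ (∀ x ∈ Metric.closedBall (0 : E) R, ‖fderiv ℝ G x‖ ≤ M) ∧
    ∀ x ∈ Metric.closedBall (0 : E) R, ∀ y ∈ Metric.closedBall (0 : E) R, ‖G x - G y‖ ≤ M * ‖x - y‖ := by
  obtain ⟨C, hC⟩ := (isCompact_closedBall (0 : E) R).exists_bound_of_continuousOn 
    (f := fderiv ℝ G) (hG.continuous_fderiv (by norm_num)).continuousOn
  have h : ∀ x ∈ Metric.closedBall (0 : E) R, ‖fderiv ℝ G x‖ ≤ max C 1 := fun x hx =>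
    (hC x hx).trans (le_max_left _ _)
  refine ⟨max C 1, by positivity, h, fun x hx y hy => ?_⟩
  exact (convex_closedBall (0 : E) R).norm_image_sub_le_of_norm_fderiv_le
    (fun z _ => hG.differentiable (by norm_num) z) h hy hx

theorem mean_val {T : E → ℝ} {G : E → E} (hTG : ∀ x, HasFDerivAt T (innerSL ℝ (G x)) x)
    {R M r : ℝ} (hM0 : 0 < M)
    (hM : ∀ x ∈ Metric.closedBall (0 : E) R, ∀ y ∈ Metric.closedBall (0 : E) R, ‖G x - G y‖ ≤ M * ‖x - y‖)
    {x₀ x x' : E} (h0 : x₀ ∈ Metric.closedBall (0 : E) R) (hx : x ∈ Metric.closedBall (0 : E) R)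
    (hx' : x' ∈ Metric.closedBall (0 : E) R) (hr : x ∈ Metric.closedBall x₀ r)
    (hr' : x' ∈ Metric.closedBall x₀ r) :
    |T x - T x' - ⟪G x₀, x - x'⟫| ≤ M * r * ‖x - x'‖ := by
  have hd : ∀ y, HasFDerivAt (fun y => T y - ⟪G x₀, y⟫) (innerSL ℝ (G y) - innerSL ℝ (G x₀)) y :=
    fun y => (hTG y).sub (innerSL ℝ (G x₀)).hasFDerivAt
  have := ((convex_closedBall (0 : E) R).inter (convex_closedBall x₀ r)).norm_image_sub_le_of_norm_hasFDerivWithin_le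
    (f := fun y => T y - ⟪G x₀, y⟫) (C := M * r) (fun y _ => (hd y).hasFDerivWithinAt) (fun y hy => by
      rw [← map_sub, innerSL_apply_norm]
      refine (hM y hy.1 x₀ h0).trans ?_
      gcongr
      simpa [dist_eq_norm] using hy.2) ⟨hx', hr'⟩ ⟨hx, hr⟩
  rw [Real.norm_eq_abs] at this
  convert this using 2
  rw [inner_sub_right]; ring

theorem crit_bigO {G : E → E} (hG : ContDiff ℝ 1 G) {x₀ : E} (h0 : G x₀ = 0)
    (hinj : ∀ v, fderiv ℝ G x₀ v = 0 → v = 0) : ∃ c > 0, ∀ᶠ x in 𝓝 x₀, ‖x - x₀‖ ≤ c * ‖G x‖ := by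
  have h1 := (hG.differentiable (by norm_num) x₀).hasFDerivAt
  obtain ⟨K, hK, hA⟩ := LinearMap.exists_antilipschitzWith (fderiv ℝ G x₀ : E →ₗ[ℝ] E)
    (LinearMap.ker_eq_bot'.2 hinj)
  have hK' : (0 : ℝ) < K := hK
  refine ⟨2 * K, by positivity, ?_⟩
  filter_upwards [(hasFDerivAt_iff_isLittleO.1 h1).bound (c := 1 / (2 * K)) (by positivity)] with x hx
  rw [h0, sub_zero] at hx
  have h2 := hA.le_mul_dist x x₀
  rw [dist_eq_norm, dist_eq_norm, ← map_sub] at h2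
  have h3 : ‖fderiv ℝ G x₀ (x - x₀)‖ ≤ ‖G x‖ + 1 / (2 * K) * ‖x - x₀‖ := by
    have := norm_sub_norm_le (fderiv ℝ G x₀ (x - x₀)) (G x)
    rw [norm_sub_rev] at this
    linarith
  have h4 : ‖x - x₀‖ ≤ K * (‖G x‖ + 1 / (2 * K) * ‖x - x₀‖) := h2.trans (by gcongr; exact h3)
  have h5 : K * (‖G x‖ + 1 / (2 * K) * ‖x - x₀‖) = K * ‖G x‖ + ‖x - x₀‖ / 2 := by field_simp
  linarith

theorem exists_Z {G : E → E} (hG : ContDiff ℝ 1 G) {K : Set E} (hK : IsCompact K)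
    (hinj : ∀ x₀ ∈ K, G x₀ = 0 → ∀ v, fderiv ℝ G x₀ v = 0 → v = 0) :
    ∃ (Z : Finset E) (c : ℝ), 0 < c ∧ ∀ x ∈ K, ∃ p ∈ Z, ‖x - p‖ ≤ c * ‖G x‖ := by
  classical
  refine hK.induction_on (p := fun K => ∃ (Z : Finset E) (c : ℝ), 0 < c ∧ ∀ x ∈ K, ∃ p ∈ Z, ‖x - p‖ ≤ c * ‖G x‖)
    ?_ ?_ ?_ ?_
  · exact ⟨∅, 1, one_pos, by simp⟩
  · rintro s s' h ⟨Z, c, hc, h1⟩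
    exact ⟨Z, c, hc, fun x hx => h1 x (h hx)⟩
  · rintro s s' ⟨Z, c, hc, h1⟩ ⟨Z', c', hc', h1'⟩
    refine ⟨Z ∪ Z', max c c', lt_max_of_lt_left hc, ?_⟩
    rintro x (hx | hx)
    · obtain ⟨p, hp, h⟩ := h1 x hx
      exact ⟨p, Finset.mem_union_left _ hp, h.trans (by gcongr; exact le_max_left _ _)⟩
    · obtain ⟨p, hp, h⟩ := h1' x hx
      exact ⟨p, Finset.mem_union_right _ hp, h.trans (by gcongr; exact le_max_right _ _)⟩
  · intro x₀ hx₀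
    have key : ∃ c > 0, ∀ᶠ x in 𝓝 x₀, ‖x - x₀‖ ≤ c * ‖G x‖ := by
      by_cases h0 : G x₀ = 0
      · exact crit_bigO hG h0 (hinj x₀ hx₀ h0)
      · have hn : 0 < ‖G x₀‖ := norm_pos_iff.2 h0
        refine ⟨2 / ‖G x₀‖, by positivity, ?_⟩
        filter_upwards [hG.continuous.norm.continuousAt.eventually (lt_mem_nhds (half_lt_self hn)),
          Metric.ball_mem_nhds x₀ one_pos] with x hx hx'
        rw [mem_ball_iff_norm] at hx'
        have : 1 ≤ 2 / ‖G x₀‖ * ‖G x‖ := by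
          rw [div_mul_eq_mul_div, le_div_iff₀ hn]; linarith
        linarith
    obtain ⟨c, hc, h⟩ := key
    exact ⟨_, mem_nhdsWithin_of_mem_nhds h, {x₀}, c, hc, fun x hx => ⟨x₀, by simp, hx⟩⟩

theorem exists_low {T : E → ℝ} {G : E → E} (hTG : ∀ x, HasFDerivAt T (innerSL ℝ (G x)) x) 
    (hG : ContDiff ℝ 1 G) {K : Set E} (hK : IsCompact K)
    (hinj : ∀ x₀ ∈ K, G x₀ = 0 → ∀ v, fderiv ℝ G x₀ v = 0 → v = 0) 
    (hcv : ∀ x₀ ∈ K, G x₀ = 0 → T x₀ = 0) :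
    ∃ c : ℝ, 0 < c ∧ ∀ x ∈ K, |T x| ≤ c * ‖G x‖ ^ 2 := by
  have hTc : Continuous T := continuous_iff_continuousAt.2 fun x => (hTG x).continuousAt
  refine hK.induction_on (p := fun K => ∃ c : ℝ, 0 < c ∧ ∀ x ∈ K, |T x| ≤ c * ‖G x‖ ^ 2)
    ?_ ?_ ?_ ?_
  · exact ⟨1, one_pos, by simp⟩
  · rintro s s' h ⟨c, hc, h1⟩
    exact ⟨c, hc, fun x hx => h1 x (h hx)⟩
  · rintro s s' ⟨c, hc, h1⟩ ⟨c', hc', h1'⟩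
    refine ⟨max c c', lt_max_of_lt_left hc, ?_⟩
    rintro x (hx | hx)
    · exact (h1 x hx).trans (by gcongr; exact le_max_left _ _)
    · exact (h1' x hx).trans (by gcongr; exact le_max_right _ _)
  · intro x₀ hx₀
    have key : ∃ c > 0, ∀ᶠ x in 𝓝 x₀, |T x| ≤ c * ‖G x‖ ^ 2 := by
      by_cases h0 : G x₀ = 0
      · obtain ⟨c, hc, h⟩ := crit_bigO hG h0 (hinj x₀ hx₀ h0)
        obtain ⟨M, hM, -, hL⟩ := exists_lip hG (‖x₀‖ + 1)
        refine ⟨M * c ^ 2, by positivity, ?_⟩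
        filter_upwards [h, Metric.ball_mem_nhds x₀ one_pos] with x hx hx'
        rw [mem_ball_iff_norm] at hx'
        have hxR : x ∈ Metric.closedBall (0 : E) (‖x₀‖ + 1) := by
          rw [mem_closedBall_zero_iff]
          calc ‖x‖ = ‖x₀ + (x - x₀)‖ := by congr 1; abel
            _ ≤ _ := (norm_add_le _ _).trans (by linarith)
        have h0R : x₀ ∈ Metric.closedBall (0 : E) (‖x₀‖ + 1) := by
          rw [mem_closedBall_zero_iff]; linarith
        have := mean_val hTG (r := ‖x - x₀‖) hM hL h0R hxR h0R (by simp [dist_eq_norm]) (by simp)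
        rw [h0, hcv x₀ hx₀ h0, inner_zero_left, sub_zero, sub_zero] at this
        calc _ ≤ _ := this
          _ ≤ M * (c * ‖G x‖) * (c * ‖G x‖) := by gcongr
          _ = _ := by ring
      · have hn : 0 < ‖G x₀‖ := norm_pos_iff.2 h0
        refine ⟨(|T x₀| + 1) * (2 / ‖G x₀‖) ^ 2, by positivity, ?_⟩
        filter_upwards [hG.continuous.norm.continuousAt.eventually (lt_mem_nhds (half_lt_self hn)),
          hTc.abs.continuousAt.eventually (gt_mem_nhds (lt_add_one |T x₀|))] with x hx hx'
        have : 1 ≤ 2 / ‖G x₀‖ * ‖G x‖ := by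
          rw [div_mul_eq_mul_div, le_div_iff₀ hn]; linarith
        rw [mul_assoc, ← mul_pow]
        nlinarith [one_le_pow₀ this (n := 2), abs_nonneg (T x₀)]
    obtain ⟨c, hc, h⟩ := key
    exact ⟨_, mem_nhdsWithin_of_mem_nhds h, c, hc, fun x hx => hx⟩

end Bounds

end PartH

section PartI
open MeasureTheory Set Filter Topology
open scoped NNReal ENNReal RealInnerProductSpace

section Shell
variable {E : Type*} 
  [NormedAddCommGroup E] [InnerProductSpace ℝ E] [FiniteDimensional ℝ E]

theorem exists_q {d : ℕ} (hd : Module.finrank ℝ E = d + 1) (v : E) (hv : ‖v‖ = 1) :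
    ∃ q : E →ₗ[ℝ] EuclideanSpace ℝ (Fin d), ∀ x, ‖x‖ ^ 2 = ‖q x‖ ^ 2 + ⟪v, x⟫ ^ 2 := by
  let S := mkSplit v hv
  have hW := finrank_perp hd v hv
  let b := (stdOrthonormalBasis ℝ ((Submodule.span ℝ {v})ᗮ : Submodule ℝ E)).reindex (finCongr hW)
  refine ⟨b.repr.toLinearEquiv.toLinearMap ∘ₗ (S.π : E →ₗ[ℝ] _), fun x => ?_⟩
  have h1 : ‖(b.repr.toLinearEquiv.toLinearMap ∘ₗ (S.π : E →ₗ[ℝ] _)) x‖ = ‖S.π x‖ :=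
    b.repr.norm_map _
  rw [h1]
  nth_rewrite 1 [← S.dec x]
  rw [norm_add_sq_real, inner_smul_right, real_inner_comm v, S.orth, norm_smul, S.hv,
    LinearIsometry.norm_map, mul_one, Real.norm_eq_abs, sq_abs]
  ring

variable [MeasurableSpace E] [BorelSpace E]

theorem piece_meas {d : ℕ} (hd : Module.finrank ℝ E = d + 1) :
    ∃ C₀ : ℝ, 0 ≤ C₀ ∧ ∀ (v x₀ : E) (r : ℝ) (A : Set E), ‖v‖ = 1 → 0 ≤ r → A ⊆ Metric.closedBall x₀ r →
      (∀ x ∈ A, ∀ x' ∈ A, |⟪v, x - x'⟫| ≤ ‖x - x'‖ / 2) →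
      μH[(d : ℝ)] A ≤ ENNReal.ofReal (C₀ * r ^ d) := by
  have hfr : Module.finrank ℝ (EuclideanSpace ℝ (Fin d)) = d := by simp
  have haar : Measure.IsAddHaarMeasure (μH[(d : ℝ)] : Measure (EuclideanSpace ℝ (Fin d))) := by
    have := MeasureTheory.isAddHaarMeasure_hausdorffMeasure (E := EuclideanSpace ℝ (Fin d))
    rwa [hfr] at this
  set Ω := (μH[(d : ℝ)] : Measure (EuclideanSpace ℝ (Fin d))) (Metric.closedBall 0 1) with hΩ
  have hΩf : Ω ≠ ∞ := (isCompact_closedBall _ _).measure_lt_top.ne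
  refine ⟨2 ^ d * Ω.toReal, by positivity, fun v x₀ r A hv hr hA h => ?_⟩
  obtain ⟨q, hq⟩ := exists_q hd v hv
  have hanti : ∀ x ∈ A, ∀ x' ∈ A, ‖x - x'‖ ≤ 2 * ‖q x - q x'‖ := by
    intro x hx x' hx'
    rw [← map_sub]
    have h1 := hq (x - x')
    have h2 := h x hx x' hx'
    rw [← sq_abs ⟪v, x - x'⟫] at h1
    have h3 := abs_nonneg ⟪v, x - x'⟫
    refine (sq_le_sq₀ (by positivity) (by positivity)).1 ?_
    nlinarith [norm_nonneg (x - x')]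
  have hle : ∀ x, ‖q x‖ ≤ ‖x‖ := fun x => by
    refine (sq_le_sq₀ (by positivity) (by positivity)).1 ?_
    nlinarith [hq x, sq_nonneg ⟪v, x⟫]
  have hinj : InjOn q A := fun x hx x' hx' he => by
    have := hanti x hx x' hx'
    rw [he, sub_self, norm_zero, mul_zero] at this
    exact sub_eq_zero.1 (norm_le_zero_iff.1 this)
  have hL : LipschitzOnWith 2 (Function.invFunOn q A) (q '' A) := by
    refine LipschitzOnWith.of_dist_le_mul ?_
    rintro _ ⟨x, hx, rfl⟩ _ ⟨x', hx', rfl⟩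
    rw [hinj.leftInvOn_invFunOn hx, hinj.leftInvOn_invFunOn hx', dist_eq_norm, dist_eq_norm]
    exact hanti x hx x' hx'
  have h1 := hL.hausdorffMeasure_image_le (d := d) (by positivity)
  rw [hinj.leftInvOn_invFunOn.image_image] at h1
  refine h1.trans ?_
  have h2 : μH[(d : ℝ)] (q '' A) ≤ ENNReal.ofReal (r ^ d) * Ω := by
    have : q '' A ⊆ Metric.closedBall (q x₀) r := by
      rintro _ ⟨x, hx, rfl⟩
      rw [mem_closedBall_iff_norm, ← map_sub]
      exact (hle _).trans (mem_closedBall_iff_norm.1 (hA hx))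
    refine (measure_mono this).trans ?_
    rw [Measure.addHaar_closedBall' _ _ hr, hfr]
  calc _ ≤ ((2 : ℝ≥0) : ℝ≥0∞) ^ (d : ℝ) * (ENNReal.ofReal (r ^ d) * Ω) := by gcongr
    _ = ENNReal.ofReal (2 ^ d * Ω.toReal * r ^ d) := by
      rw [ENNReal.ofReal_mul (by positivity), ENNReal.ofReal_mul (by positivity),
        ENNReal.ofReal_toReal hΩf, ENNReal.ofReal_pow (by norm_num : (0 : ℝ) ≤ 2), ENNReal.rpow_natCast]
      rw [show ENNReal.ofReal 2 = ((2 : ℝ≥0) : ℝ≥0∞) by simp]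
      ring

theorem exists_cover (a b : ℝ) (hb : 0 < b) : ∃ F : Finset E, ∀ (l : ℝ), 0 < l → ∀ p x : E, ‖x - p‖ ≤ a * l →
    ∃ f ∈ F, x ∈ Metric.closedBall (p + l • f) (b * l) := by
  obtain ⟨F, -, hF, h⟩ := (isCompact_closedBall (0 : E) a).finite_cover_balls hb
  refine ⟨hF.toFinset, fun l hl p x hx => ?_⟩
  have : l⁻¹ • (x - p) ∈ Metric.closedBall (0 : E) a := by
    rw [mem_closedBall_zero_iff, norm_smul, norm_inv, Real.norm_of_nonneg hl.le, inv_mul_le_iff₀ hl]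
    linarith
  obtain ⟨f, hf, hx'⟩ := mem_iUnion₂.1 (h this)
  refine ⟨f, hF.mem_toFinset.2 hf, ?_⟩
  rw [mem_ball_iff_norm] at hx'
  rw [mem_closedBall_iff_norm]
  have : x - (p + l • f) = l • (l⁻¹ • (x - p) - f) := by
    rw [smul_sub, smul_smul, mul_inv_cancel₀ hl.ne', one_smul]; abel
  rw [this, norm_smul, Real.norm_of_nonneg hl.le, mul_comm]
  gcongr

theorem shell_bound {d : ℕ} (hd : Module.finrank ℝ E = d + 1) {T : E → ℝ} {G : E → E}
    (hTG : ∀ x, HasFDerivAt T (innerSL ℝ (G x)) x) (hG : ContDiff ℝ 1 G) {K : Set E} (hK : IsCompact K)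
    (hinj : ∀ x₀ ∈ K, G x₀ = 0 → ∀ v, fderiv ℝ G x₀ v = 0 → v = 0) :
    ∃ C : ℝ, 0 ≤ C ∧ ∀ (l s : ℝ), 0 < l →
      μH[(d : ℝ)] (K ∩ T ⁻¹' {s} ∩ {x | l / 2 < ‖G x‖ ∧ ‖G x‖ ≤ l}) ≤ ENNReal.ofReal (C * l ^ d) := by
  obtain ⟨R, hR⟩ := hK.isBounded.subset_closedBall (0 : E)
  obtain ⟨M, hM, -, hL⟩ := exists_lip hG R
  obtain ⟨Z, c, hc, hZ⟩ := exists_Z hG hK hinj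
  obtain ⟨C₀, hC₀, hpiece⟩ := piece_meas (E := E) hd
  obtain ⟨F, hF⟩ := exists_cover (E := E) c (1 / (8 * M)) (by positivity)
  refine ⟨(Z ×ˢ F).card * (C₀ * (1 / (4 * M)) ^ d), by positivity, fun l s hl => ?_⟩
  set A := K ∩ T ⁻¹' {s} ∩ {x | l / 2 < ‖G x‖ ∧ ‖G x‖ ≤ l} with hA
  have hsub : A ⊆ ⋃ z ∈ Z ×ˢ F, A ∩ Metric.closedBall (z.1 + l • z.2) (1 / (8 * M) * l) := by
    intro x hx
    obtain ⟨p, hp, hxp⟩ := hZ x hx.1.1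
    obtain ⟨f, hf, hxf⟩ := hF l hl p x (hxp.trans (by gcongr; exact hx.2.2))
    exact mem_iUnion₂.2 ⟨(p, f), Finset.mem_product.2 ⟨hp, hf⟩, hx, hxf⟩
  have hone : ∀ z ∈ Z ×ˢ F, μH[(d : ℝ)] (A ∩ Metric.closedBall (z.1 + l • z.2) (1 / (8 * M) * l)) ≤
      ENNReal.ofReal (C₀ * (1 / (4 * M)) ^ d * l ^ d) := by
    intro z _
    rcases (A ∩ Metric.closedBall (z.1 + l • z.2) (1 / (8 * M) * l)).eq_empty_or_nonempty with h | ⟨x₀, hx₀⟩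
    · rw [h]; simp
    have hg : l / 2 < ‖G x₀‖ := hx₀.1.2.1
    have hg0 : 0 < ‖G x₀‖ := by linarith
    have hsub : A ∩ Metric.closedBall (z.1 + l • z.2) (1 / (8 * M) * l) ⊆ Metric.closedBall x₀ (1 / (4 * M) * l) := by
      intro x hx
      have h1 := hx.2
      have h2 := hx₀.2
      rw [Metric.mem_closedBall] at h1 h2 ⊢
      rw [dist_comm] at h2
      have h3 := dist_triangle x (z.1 + l • z.2) x₀
      have : 1 / (4 * M) * l = 1 / (8 * M) * l + 1 / (8 * M) * l := by field_simp; norm_num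
      linarith
    have := hpiece (‖G x₀‖⁻¹ • G x₀) x₀ (1 / (4 * M) * l) _ (by
      rw [norm_smul, norm_inv, norm_norm, inv_mul_cancel₀ hg0.ne']) (by positivity) hsub ?_
    · rwa [mul_pow, ← mul_assoc] at this
    intro x hx x' hx'
    have hm := mean_val hTG hM hL (hR hx₀.1.1.1) (hR hx.1.1.1) (hR hx'.1.1.1) (hsub hx) (hsub hx')
    rw [show T x = s from hx.1.1.2, show T x' = s from hx'.1.1.2, sub_self, zero_sub, abs_neg] at hm
    rw [real_inner_smul_left, abs_mul, abs_of_pos (inv_pos.2 hg0), inv_mul_le_iff₀ hg0]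
    have h4 : M * (1 / (4 * M) * l) = l / 4 := by field_simp
    rw [h4] at hm
    nlinarith [norm_nonneg (x - x')]
  calc _ ≤ _ := measure_mono hsub
    _ ≤ _ := measure_biUnion_finset_le _ _
    _ ≤ _ := Finset.sum_le_sum hone
    _ = _ := by
      rw [Finset.sum_const, nsmul_eq_mul, mul_assoc (((Z ×ˢ F).card : ℕ) : ℝ), ENNReal.ofReal_mul (by positivity : (0 : ℝ) ≤ (((Z ×ˢ F).card : ℕ) : ℝ)), ENNReal.ofReal_natCast]

end Shell

end PartI

section PartJ
open MeasureTheory Set Filter Topology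
open scoped NNReal ENNReal RealInnerProductSpace

section Dyadic
variable {E : Type*} 
  [NormedAddCommGroup E] [InnerProductSpace ℝ E] [FiniteDimensional ℝ E]
  [MeasurableSpace E] [BorelSpace E]

theorem dyadic {d : ℕ} {T : E → ℝ} {G : E → E} (hTc : Continuous T) (hGc : Continuous G) {K : Set E} {C : ℝ}
    (hC : 0 ≤ C)
    (hsh : ∀ (l s : ℝ), 0 < l →
      μH[(d : ℝ)] (K ∩ T ⁻¹' {s} ∩ {x | l / 2 < ‖G x‖ ∧ ‖G x‖ ≤ l}) ≤ ENNReal.ofReal (C * l ^ d))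
    {s b B M : ℝ} (hM : 0 < M) (hb : 0 < b) (hB : 0 < B) (hK : T ⁻¹' {s} ⊆ K)
    (hbG : ∀ x ∈ T ⁻¹' {s}, b ≤ ‖G x‖) (hGB : ∀ x ∈ T ⁻¹' {s}, ‖G x‖ ≤ B) {N : ℕ} 
    (hN : B / b < 2 ^ (N + 1)) :
    μH[(d : ℝ)] (T ⁻¹' {s}) < ∞ ∧ ∫ x in T ⁻¹' {s}, 2 * M / ‖G x‖ ^ 2 ∂μH[(d : ℝ)] ≤
      8 * M * C * ∑ k ∈ Finset.range (N + 1), (B / 2 ^ k) ^ d / (B / 2 ^ k) ^ 2 := by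
  set A : ℕ → Set E := fun k => K ∩ T ⁻¹' {s} ∩ {x | B / 2 ^ k / 2 < ‖G x‖ ∧ ‖G x‖ ≤ B / 2 ^ k} with hA
  have hcov : T ⁻¹' {s} ⊆ ⋃ k ∈ Finset.range (N + 1), A k := by
    intro x hx
    have h1 := hbG x hx
    have h2 := hGB x hx
    have h3 : 0 < ‖G x‖ := hb.trans_le h1
    obtain ⟨k, hk1, hk2⟩ := exists_nat_pow_near ((one_le_div h3).2 h2) (one_lt_two (α := ℝ))
    refine mem_iUnion₂.2 ⟨k, ?_, ⟨hK hx, hx⟩, ?_, ?_⟩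
    · have : (2 : ℝ) ^ k < 2 ^ (N + 1) := (hk1.trans (by gcongr)).trans_lt hN
      exact Finset.mem_range.2 ((pow_lt_pow_iff_right₀ one_lt_two).1 this)
    · rw [div_lt_iff₀ h3] at hk2
      rw [div_div, div_lt_iff₀ (by positivity), ← pow_succ]
      linarith
    · rw [le_div_iff₀ h3] at hk1
      rw [le_div_iff₀ (by positivity)]
      linarith
  have hAm : ∀ k, μH[(d : ℝ)] (A k) ≤ ENNReal.ofReal (C * (B / 2 ^ k) ^ d) := fun k =>
    hsh (B / 2 ^ k) s (by positivity)
  refine ⟨?_, ?_⟩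
  · refine (measure_mono hcov).trans_lt ((measure_biUnion_finset_le _ _).trans_lt ?_)
    exact ENNReal.sum_lt_top.2 fun k _ => (hAm k).trans_lt ENNReal.ofReal_lt_top
  · have hmeas : Measurable fun x => 2 * M / ‖G x‖ ^ 2 :=
      measurable_const.div (hGc.norm.pow 2).measurable
    have hnn : ∀ x, 0 ≤ 2 * M / ‖G x‖ ^ 2 := fun x => by positivity
    rw [integral_eq_lintegral_of_nonneg_ae (f := fun x => 2 * M / ‖G x‖ ^ 2) (Eventually.of_forall hnn)
      hmeas.aestronglyMeasurable]
    refine ENNReal.toReal_le_of_le_ofReal (by positivity) ?_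
    have hms : MeasurableSet (T ⁻¹' {s}) := hTc.measurable (measurableSet_singleton s)
    have hle : (μH[(d : ℝ)] : Measure E).restrict (T ⁻¹' {s}) ≤
        ∑ k ∈ Finset.range (N + 1), (μH[(d : ℝ)] : Measure E).restrict (T ⁻¹' {s} ∩ {x | B / 2 ^ k / 2 < ‖G x‖ ∧ ‖G x‖ ≤ B / 2 ^ k}) := by
      refine Measure.le_iff.2 fun Y hY => ?_
      rw [Measure.restrict_apply hY, Measure.finsetSum_apply]
      simp only [Measure.restrict_apply hY]
      refine (measure_mono ?_).trans (measure_biUnion_finset_le _ _)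
      rintro x ⟨hx, hxs⟩
      obtain ⟨k, hk, hxk⟩ := mem_iUnion₂.1 (hcov hxs)
      exact mem_iUnion₂.2 ⟨k, hk, hx, hxs, hxk.2⟩
    refine (lintegral_mono' hle le_rfl).trans ?_
    rw [lintegral_finsetSum_measure, Finset.mul_sum, ENNReal.ofReal_sum_of_nonneg (fun k _ => by positivity)]
    refine Finset.sum_le_sum fun k _ => ?_
    set l := B / 2 ^ k with hl
    have hl0 : 0 < l := by positivity
    have hms' : MeasurableSet (T ⁻¹' {s} ∩ {x | l / 2 < ‖G x‖ ∧ ‖G x‖ ≤ l}) :=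
      hms.inter ((isOpen_lt continuous_const hGc.norm).measurableSet.inter
        (isClosed_le hGc.norm continuous_const).measurableSet)
    calc _ ≤ ∫⁻ x in T ⁻¹' {s} ∩ {x | l / 2 < ‖G x‖ ∧ ‖G x‖ ≤ l}, ENNReal.ofReal (8 * M / l ^ 2) ∂μH[(d : ℝ)] := by
          refine setLIntegral_mono' hms' fun x hx => ENNReal.ofReal_le_ofReal ?_
          have h1 : l / 2 < ‖G x‖ := hx.2.1
          calc 2 * M / ‖G x‖ ^ 2 ≤ 2 * M / (l / 2) ^ 2 := by gcongr
            _ = _ := by field_simp; norm_num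
      _ ≤ ENNReal.ofReal (8 * M / l ^ 2) * ENNReal.ofReal (C * l ^ d) := by
          rw [setLIntegral_const]
          gcongr
          refine (measure_mono ?_).trans (hAm k)
          rintro x ⟨hx, hx'⟩
          exact ⟨⟨hK hx, hx⟩, hx'⟩
      _ = _ := by
          rw [← ENNReal.ofReal_mul (by positivity)]
          congr 1
          ring

theorem core {d : ℕ} (hd : Module.finrank ℝ E = d + 1) {T : E → ℝ} {G : E → E} (hT : ContDiff ℝ 2 T)
    (hTG : ∀ x, HasFDerivAt T (innerSL ℝ (G x)) x) (hG : ContDiff ℝ 1 G) {ε : ℝ} (hε : 0 < ε)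
    (hK : IsCompact (T ⁻¹' Icc (-ε) ε))
    (hinj : ∀ x₀ ∈ T ⁻¹' Icc (-ε) ε, G x₀ = 0 → ∀ v, fderiv ℝ G x₀ v = 0 → v = 0)
    (hcv : ∀ x₀ ∈ T ⁻¹' Icc (-ε) ε, G x₀ = 0 → T x₀ = 0) :
    ∃ A B C : ℝ, 0 < A ∧ 0 < B ∧ 0 ≤ C ∧ ∀ t ∈ Ioo (-ε) ε, t ≠ 0 → 
      ∃ (D : ℝ) (N : ℕ), HasDerivAt (fun s => (μH[(d : ℝ)] (T ⁻¹' {s})).toReal) D t ∧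
        (2 : ℝ) ^ N ≤ A / √|t| ∧ |D| ≤ C * ∑ k ∈ Finset.range (N + 1), (B / 2 ^ k) ^ d / (B / 2 ^ k) ^ 2 := by
  have hTc := hT.continuous
  have hGc := hG.continuous
  obtain ⟨c, hc, hlow⟩ := exists_low hTG hG hK hinj hcv
  obtain ⟨C, hC, hsh⟩ := shell_bound hd hTG hG hK hinj
  obtain ⟨R, hR⟩ := hK.isBounded.subset_closedBall (0 : E)
  obtain ⟨M, hM, hfd, -⟩ := exists_lip hG R
  obtain ⟨B₀, hB₀⟩ := hK.exists_bound_of_continuousOn hGc.continuousOn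
  set B := max B₀ (√ε / √c) with hBdef
  have hB : 0 < B := lt_max_of_lt_right (by positivity)
  have hsub : ∀ s ∈ Icc (-ε) ε, T ⁻¹' {s} ⊆ T ⁻¹' Icc (-ε) ε := fun s hs =>
    preimage_mono (singleton_subset_iff.2 hs)
  have key : ∀ s ∈ Icc (-ε) ε, s ≠ 0 → ∃ N : ℕ, (2 : ℝ) ^ N ≤ (B * √c) / √|s| ∧ 
      (∀ x ∈ T ⁻¹' {s}, G x ≠ 0) ∧ 
      μH[(d : ℝ)] (T ⁻¹' {s}) < ∞ ∧ ∫ x in T ⁻¹' {s}, 2 * M / ‖G x‖ ^ 2 ∂μH[(d : ℝ)] ≤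
      8 * M * C * ∑ k ∈ Finset.range (N + 1), (B / 2 ^ k) ^ d / (B / 2 ^ k) ^ 2 := by
    intro s hs hs0
    have hs' : 0 < |s| := abs_pos.2 hs0
    have hsε : |s| ≤ ε := abs_le.2 hs
    have hb : 0 < √|s| / √c := by positivity
    have hbG : ∀ x ∈ T ⁻¹' {s}, √|s| / √c ≤ ‖G x‖ := by
      intro x hx
      have h1 := hlow x (hsub s hs hx)
      rw [show T x = s from hx] at h1
      rw [← Real.sqrt_div (abs_nonneg s)]
      refine Real.sqrt_le_iff.2 ⟨norm_nonneg _, ?_⟩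
      rw [div_le_iff₀ hc]; linarith
    have h1 : 1 ≤ B / (√|s| / √c) := by
      rw [one_le_div hb]
      calc _ ≤ √ε / √c := by gcongr
        _ ≤ _ := le_max_right _ _
    obtain ⟨N, hN1, hN2⟩ := exists_nat_pow_near h1 (one_lt_two (α := ℝ))
    refine ⟨N, ?_, ?_, dyadic hTc hGc hC hsh hM hb hB (hsub s hs) hbG 
      (fun x hx => (hB₀ x (hsub s hs hx)).trans (le_max_left _ _)) hN2⟩
    · rwa [div_div_eq_mul_div] at hN1
    · intro x hx h0
      have := hbG x hx
      rw [h0, norm_zero] at this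
      linarith
  refine ⟨B * √c, B, (d + 1) * (8 * M * C), by positivity, hB, by positivity, fun t ht ht0 => ?_⟩
  obtain ⟨N, hN, hne, -, hint⟩ := key t (Ioo_subset_Icc_self ht) ht0
  have hfin : ∀ᶠ s in 𝓝 t, μH[(d : ℝ)] (T ⁻¹' {s}) < ∞ := by
    filter_upwards [Ioo_mem_nhds ht.1 ht.2, isOpen_ne.mem_nhds ht0] with s hs hs0
    obtain ⟨_, _, _, h, _⟩ := key s (Ioo_subset_Icc_self hs) hs0
    exact h
  have hδ : 0 < min (t + ε) (ε - t) := lt_min (by linarith [ht.1]) (by linarith [ht.2])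
  have hcompt : IsCompact (T ⁻¹' Icc (t - min (t + ε) (ε - t)) (t + min (t + ε) (ε - t))) := by
    refine hK.of_isClosed_subset (isClosed_Icc.preimage hTc) (preimage_mono (Icc_subset_Icc ?_ ?_))
    · linarith [min_le_left (t + ε) (ε - t)]
    · linarith [min_le_right (t + ε) (ε - t)]
  obtain ⟨D, hD1, hD2⟩ := main_deriv hT hG hTG hd hfin hδ hcompt hne
    (fun x hx => hfd x (hR (hsub t (Ioo_subset_Icc_self ht) hx)))
  refine ⟨D, N, hD1, hN, hD2.trans ?_⟩
  rw [mul_assoc]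
  gcongr

end Dyadic

theorem sum_ge4 {d N : ℕ} (hd : 3 ≤ d) {B : ℝ} (hB : 0 < B) :
    ∑ k ∈ Finset.range (N + 1), (B / 2 ^ k) ^ d / (B / 2 ^ k) ^ 2 ≤ 2 * B ^ (d - 2) := by
  calc _ ≤ ∑ k ∈ Finset.range (N + 1), B ^ (d - 2) * (1 / 2 : ℝ) ^ k := by
        refine Finset.sum_le_sum fun k _ => ?_
        obtain ⟨j, rfl⟩ : ∃ j, d = j + 3 := ⟨d - 3, by omega⟩
        have h0 : B / 2 ^ k ≠ 0 := by positivity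
        have : (B / 2 ^ k) ^ (j + 3) / (B / 2 ^ k) ^ 2 = (B / 2 ^ k) ^ (j + 1) := by
          rw [div_eq_iff (by positivity)]; ring
        rw [this, show j + 3 - 2 = j + 1 by omega, div_eq_mul_inv, mul_pow, one_div, inv_pow 2 k]
        have h1 : ((2 : ℝ) ^ k)⁻¹ ≤ 1 := inv_le_one_of_one_le₀ (one_le_pow₀ one_le_two)
        have h2 : (((2 : ℝ) ^ k)⁻¹) ^ (j + 1) ≤ ((2 : ℝ) ^ k)⁻¹ :=
          pow_le_of_le_one (by positivity) h1 (Nat.succ_ne_zero j)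
        exact mul_le_mul_of_nonneg_left h2 (by positivity : (0:ℝ) ≤ B ^ (j + 1))
    _ ≤ B ^ (d - 2) * 2 := by
        rw [← Finset.mul_sum]
        gcongr
        exact sum_geometric_two_le _
    _ = _ := by ring

theorem sum_eq1 {N : ℕ} {B : ℝ} (hB : 0 < B) :
    ∑ k ∈ Finset.range (N + 1), (B / 2 ^ k) ^ 1 / (B / 2 ^ k) ^ 2 ≤ 2 / B * 2 ^ N := by
  have h : ∀ k, (B / 2 ^ k) ^ 1 / (B / 2 ^ k) ^ 2 = 1 / B * (2 : ℝ) ^ k := fun k => by field_simp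
  simp only [h]
  rw [← Finset.mul_sum, geom_sum_eq (by norm_num)]
  rw [div_mul_eq_mul_div, div_mul_eq_mul_div]
  refine div_le_div_of_nonneg_right ?_ hB.le
  rw [pow_succ]
  norm_num
  linarith

theorem sum_eq2 {N : ℕ} {B : ℝ} (hB : 0 < B) :
    ∑ k ∈ Finset.range (N + 1), (B / 2 ^ k) ^ 2 / (B / 2 ^ k) ^ 2 = (N : ℝ) + 1 := by
  have h : ∀ k, (B / 2 ^ k) ^ 2 / (B / 2 ^ k) ^ 2 = (1 : ℝ) := fun k => div_self (by positivity)
  simp [h]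

theorem log_bd {N : ℕ} {A t : ℝ} (hA : 0 < A) (ht : t ≠ 0) (ht2 : |t| ≤ 1 / 2) (hN : (2 : ℝ) ^ N ≤ A / √|t|) :
    (N + 1 : ℝ) ≤ ((|Real.log A| / Real.log 2 + 1) / Real.log 2 + 1 / Real.log 2) * Real.log (1 / |t|) := by
  have h2 : 0 < Real.log 2 := Real.log_pos one_lt_two
  have ht' : 0 < |t| := abs_pos.2 ht
  have hL : Real.log 2 ≤ Real.log (1 / |t|) := by
    apply Real.log_le_log (by norm_num)
    rw [le_div_iff₀ ht']; linarith
  have h := Real.log_le_log (by positivity) hN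
  rw [Real.log_pow, Real.log_div hA.ne' (by positivity), Real.log_sqrt ht'.le] at h
  set L := Real.log (1 / |t|) with hLdef
  have hLt : Real.log |t| = -L := by rw [hLdef, one_div, Real.log_inv]; ring
  rw [hLt] at h
  set a := |Real.log A| with ha
  have ha0 : 0 ≤ a := abs_nonneg _
  have haA : Real.log A ≤ a := le_abs_self _
  have h3 : a ≤ a / Real.log 2 * L := by
    rw [div_mul_eq_mul_div, le_div_iff₀ h2]; gcongr
  have h4 : (N : ℝ) * Real.log 2 ≤ (a / Real.log 2 + 1) * L := by linarith
  have h5 : (N : ℝ) ≤ (a / Real.log 2 + 1) * L / Real.log 2 := by rwa [le_div_iff₀ h2]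
  have h6 : 1 ≤ 1 / Real.log 2 * L := by
    rw [div_mul_eq_mul_div, le_div_iff₀ h2]; linarith
  calc (N + 1 : ℝ) ≤ (a / Real.log 2 + 1) * L / Real.log 2 + 1 / Real.log 2 * L := add_le_add h5 h6
    _ = _ := by ring

end PartJ

end Helpers

open MeasureTheory

/-- Let `T : ℝ^m → ℝ` (`m ≥ 2`) be `C²` with `T⁻¹([−ε, ε])` compact, all
critical points with values in `[−ε, ε]` nondegenerate, and `0` the only critical value
of `T` in `[−ε, ε]`. Then `φ(t) = ℋ^{m−1}(T⁻¹(t))` is differentiable at every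
`t ∈ (−ε, ε) \ {0}`, and there are `C > 0` and `ε' ∈ (0, ε)` such that for all nonzero
`t ∈ (−ε', ε')`: `|φ'(t)| ≤ C` if `m ≥ 4`, `|φ'(t)| ≤ C log(1/|t|)` if `m = 3`, and
`|φ'(t)| ≤ C |t|^{−1/2}` if `m = 2`. -/
theorem stmt9 {m : ℕ} (hm : 2 ≤ m) (T : EuclideanSpace ℝ (Fin m) → ℝ)
    (hT : ContDiff ℝ 2 T) (ε : ℝ) (hε : 0 < ε)
    (hcomp : IsCompact (T ⁻¹' Set.Icc (-ε) ε))
    (hnd : ∀ p : EuclideanSpace ℝ (Fin m), T p ∈ Set.Icc (-ε) ε → fderiv ℝ T p = 0 →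
      ∀ v : EuclideanSpace ℝ (Fin m),
        (∀ w : EuclideanSpace ℝ (Fin m), fderiv ℝ (fun y => fderiv ℝ T y) p v w = 0) →
        v = 0)
    (hcv : ∀ p : EuclideanSpace ℝ (Fin m), fderiv ℝ T p = 0 →
      T p ∈ Set.Icc (-ε) ε → T p = 0) :
    (∀ t ∈ Set.Ioo (-ε) ε, t ≠ 0 →
      DifferentiableAt ℝ (fun s : ℝ => (μH[(m : ℝ) - 1] (T ⁻¹' {s})).toReal) t) ∧
    ∃ C > (0 : ℝ), ∃ ε' : ℝ, 0 < ε' ∧ ε' < ε ∧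
      ∀ t ∈ Set.Ioo (-ε') ε', t ≠ 0 →
        (4 ≤ m →
          |deriv (fun s : ℝ => (μH[(m : ℝ) - 1] (T ⁻¹' {s})).toReal) t| ≤ C) ∧
        (m = 3 →
          |deriv (fun s : ℝ => (μH[(m : ℝ) - 1] (T ⁻¹' {s})).toReal) t| ≤
            C * Real.log (1 / |t|)) ∧
        (m = 2 →
          |deriv (fun s : ℝ => (μH[(m : ℝ) - 1] (T ⁻¹' {s})).toReal) t| ≤
            C * |t| ^ (-(1 / 2) : ℝ)) := by
  obtain ⟨d, rfl⟩ : ∃ d, m = d + 1 := ⟨m - 1, by omega⟩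
  have hmd : (((d + 1 : ℕ) : ℝ) - 1) = (d : ℝ) := by push_cast; ring
  rw [hmd]
  let J := (InnerProductSpace.toDual ℝ (EuclideanSpace ℝ (Fin (d + 1)))).symm
  let G : EuclideanSpace ℝ (Fin (d + 1)) → EuclideanSpace ℝ (Fin (d + 1)) :=
    fun x => J (fderiv ℝ T x)
  have hfd : ContDiff ℝ 1 (fun y => fderiv ℝ T y) := hT.fderiv_right (by norm_num)
  have hG : ContDiff ℝ 1 G := J.contDiff.comp hfd
  have hTG : ∀ x, HasFDerivAt T (innerSL ℝ (G x)) x := by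
    intro x
    have h1 := (hT.differentiable (by norm_num) x).hasFDerivAt
    have h2 : innerSL ℝ (G x) = fderiv ℝ T x := by
      ext w
      simp [G, J, InnerProductSpace.toDual_symm_apply]
    rwa [h2]
  have hG0 : ∀ x, G x = 0 → fderiv ℝ T x = 0 := by
    intro x hx
    exact (LinearIsometryEquiv.map_eq_zero_iff J).1 hx
  have hfG : ∀ x v, fderiv ℝ G x v = J (fderiv ℝ (fun y => fderiv ℝ T y) x v) := by
    intro x v
    let JL : (EuclideanSpace ℝ (Fin (d + 1)) →L[ℝ] ℝ) →L[ℝ] EuclideanSpace ℝ (Fin (d + 1)) :=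
      { toFun := fun f => J f
        map_add' := fun a b => map_add J a b
        map_smul' := fun r a => J.map_smulₛₗ r a
        cont := J.continuous }
    have h := JL.hasFDerivAt.comp x
      (hfd.differentiable (by norm_num) x).hasFDerivAt
    have h' : HasFDerivAt G _ x := h
    rw [h'.fderiv]; rfl
  have hinj : ∀ x₀ ∈ T ⁻¹' Set.Icc (-ε) ε, G x₀ = 0 → ∀ v, fderiv ℝ G x₀ v = 0 → v = 0 := by
    intro x hx h0 v hv
    rw [hfG] at hv
    have := (LinearIsometryEquiv.map_eq_zero_iff J).1 hv
    exact hnd x hx (hG0 x h0) v (fun w => by rw [this]; rfl)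
  obtain ⟨A, B, C, hA, hB, hC, hmain⟩ := core (d := d) (by simp) hT hTG hG hε hcomp hinj
    (fun x hx h0 => hcv x (hG0 x h0) hx)
  refine ⟨fun t ht ht0 => ?_, ?_⟩
  · obtain ⟨D, N, hD, -⟩ := hmain t ht ht0
    exact hD.differentiableAt
  set c3 := (|Real.log A| / Real.log 2 + 1) / Real.log 2 + 1 / Real.log 2 with hc3
  have hl2 : 0 < Real.log 2 := Real.log_pos one_lt_two
  have hc3' : 0 ≤ c3 := by positivity
  refine ⟨C * (2 * B ^ (d - 2)) + C * c3 + C * (2 / B * A) + 1, by positivity,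
    min (ε / 2) (1 / 2), by positivity, (min_le_left _ _).trans_lt (by linarith), ?_⟩
  intro t ht ht0
  have htε : t ∈ Set.Ioo (-ε) ε := by
    have := min_le_left (ε / 2) (1 / 2)
    exact ⟨by linarith [ht.1], by linarith [ht.2]⟩
  have ht2 : |t| ≤ 1 / 2 := (abs_lt.2 ht).le.trans (min_le_right _ _)
  have htp : 0 < |t| := abs_pos.2 ht0
  obtain ⟨D, N, hD, hN, hDb⟩ := hmain t htε ht0
  rw [hD.deriv]
  have p1 : 0 ≤ C * (2 * B ^ (d - 2)) := by positivity
  have p2 : 0 ≤ C * c3 := by positivity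
  have p3 : 0 ≤ C * (2 / B * A) := by positivity
  refine ⟨fun h4 => ?_, fun h3 => ?_, fun h2 => ?_⟩
  · have h := mul_le_mul_of_nonneg_left (sum_ge4 (N := N) (show 3 ≤ d by omega) hB) hC
    linarith
  · obtain rfl : d = 2 := by omega
    rw [sum_eq2 hB] at hDb
    have h := mul_le_mul_of_nonneg_left (log_bd hA ht0 ht2 hN) hC
    rw [← hc3, ← mul_assoc] at h
    have hL : 0 ≤ Real.log (1 / |t|) := by
      apply Real.log_nonneg
      rw [le_div_iff₀ htp]; linarith
    refine (hDb.trans h).trans (mul_le_mul_of_nonneg_right ?_ hL)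
    linarith
  · obtain rfl : d = 1 := by omega
    have h := mul_le_mul_of_nonneg_left (sum_eq1 (N := N) hB) hC
    have hs : |t| ^ (-(1 / 2) : ℝ) = 1 / √|t| := by
      rw [Real.rpow_neg htp.le, Real.sqrt_eq_rpow, one_div (_ ^ _)]
    have hq : 0 ≤ 1 / √|t| := by positivity
    rw [hs]
    calc |D| ≤ C * (2 / B * 2 ^ N) := hDb.trans h
      _ ≤ C * (2 / B * (A / √|t|)) := by gcongr
      _ = C * (2 / B * A) * (1 / √|t|) := by ring
      _ ≤ _ := mul_le_mul_of_nonneg_right (by linarith) hq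
end

section
/- Define T : ℝ² → ℝ by T(x, y) = x² − y², and let φ(t) = ℋ¹({p ∈ ℝ² : ‖p‖ ≤ 1 and T(p) = t}) be the length of the level set of T at level t inside the closed unit disk. Then there exist δ > 0 and constants c, C > 0 such that φ is differentiable at every t ∈ (0, δ) and c·t^{−1/2} ≤ −φ'(t) ≤ C·t^{−1/2} for all t ∈ (0, δ). -/
open MeasureTheory

/-- The length of the level set `{x² − y² = t}` inside the closed unit disk. -/
noncomputable def saddleLevelLength (t : ℝ) : ℝ :=
  (μH[(1 : ℝ)] {p : EuclideanSpace ℝ (Fin 2) |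
    ‖p‖ ≤ 1 ∧ p 0 ^ 2 - p 1 ^ 2 = t}).toReal

namespace Sad
noncomputable def γ (u : ℝ) : EuclideanSpace ℝ (Fin 2) := !₂[√(1+u^2), u]
noncomputable def k (u : ℝ) : ℝ := u / √(1+u^2)
noncomputable def g (u : ℝ) : ℝ := √(1 + k u ^ 2)

lemma sp (u : ℝ) : 0 < √(1+u^2) := by positivity
lemma ssq (u : ℝ) : √(1+u^2)^2 = 1+u^2 := Real.sq_sqrt (by positivity)

lemma k_nonneg {u : ℝ} (h : 0 ≤ u) : 0 ≤ k u := by unfold k; positivity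
lemma k_mono {a b : ℝ} (ha : 0 ≤ a) (hab : a ≤ b) : k a ≤ k b := by
  unfold k
  rw [div_le_div_iff₀ (sp a) (sp b)]
  refine (pow_le_pow_iff_left₀ (by positivity) (by have := ha.trans hab; positivity) two_ne_zero).1 ?_
  rw [mul_pow, mul_pow, ssq, ssq]
  nlinarith [mul_self_le_mul_self ha hab]

lemma k_sq (u : ℝ) : k u ^ 2 = 1 - 1 / (1+u^2) := by
  unfold k; rw [div_pow, ssq]; field_simp; ring

lemma g_nonneg (u : ℝ) : 0 ≤ g u := Real.sqrt_nonneg _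
lemma g_mono {a b : ℝ} (ha : 0 ≤ a) (hab : a ≤ b) : g a ≤ g b := by
  unfold g
  have := k_mono ha hab
  have := k_nonneg ha
  gcongr
lemma g_sq (u : ℝ) : g u ^ 2 = 2 - 1 / (1+u^2) := by
  unfold g; rw [Real.sq_sqrt (by positivity), k_sq]; ring
lemma g_le (u : ℝ) : g u ≤ √2 := by
  apply Real.le_sqrt_of_sq_le
  rw [g_sq]; have : 0 ≤ 1/(1+u^2) := by positivity
  linarith
lemma one_le_g (u : ℝ) : 1 ≤ g u := by
  unfold g; rw [Real.one_le_sqrt]; nlinarith [sq_nonneg (k u)]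
lemma g_cont : Continuous g := by
  unfold g k
  have : ∀ x : ℝ, √(1+x^2) ≠ 0 := fun x => (sp x).ne'
  fun_prop (disch := assumption)
lemma γ_cont : Continuous γ := by
  unfold γ; fun_prop

lemma γ_dist (u v : ℝ) : dist (γ u) (γ v) = √((√(1+u^2)-√(1+v^2))^2 + (u-v)^2) := by
  simp [γ, EuclideanSpace.dist_eq, Real.dist_eq, sq_abs]

lemma key {u v : ℝ} (hu : 0 ≤ u) (hv : 0 ≤ v) :
    |√(1+u^2)-√(1+v^2)| * (√(1+u^2)+√(1+v^2)) = |u-v| * (u+v) := by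
  have h1 : |√(1+u^2)+√(1+v^2)| = √(1+u^2)+√(1+v^2) := abs_of_nonneg (by positivity)
  have h2 : |u+v| = u+v := abs_of_nonneg (by positivity)
  rw [← h1, ← abs_mul, ← h2, ← abs_mul]
  congr 1
  nlinarith [ssq u, ssq v]

lemma k_mul (u : ℝ) : k u * √(1+u^2) = u := by
  unfold k; have := (sp u).ne'; field_simp

lemma dist_lower {a u v : ℝ} (ha : 0 ≤ a) (hu : a ≤ u) (hv : a ≤ v) :
    g a * |u-v| ≤ dist (γ u) (γ v) := by
  rw [γ_dist]
  apply Real.le_sqrt_of_sq_le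
  have hk := key (ha.trans hu) (ha.trans hv)
  have h1 : k a * (√(1+u^2)+√(1+v^2)) ≤ u + v := by
    have := mul_le_mul_of_nonneg_right (k_mono ha hu) (sp u).le
    have := mul_le_mul_of_nonneg_right (k_mono ha hv) (sp v).le
    rw [k_mul] at *; linarith
  have h2 : k a * |u-v| ≤ |√(1+u^2)-√(1+v^2)| := by
    have hp : 0 < √(1+u^2)+√(1+v^2) := by positivity
    refine le_of_mul_le_mul_right ?_ hp
    rw [hk]; nlinarith [abs_nonneg (u-v)]
  have h3 : (k a * |u-v|)^2 ≤ |√(1+u^2)-√(1+v^2)|^2 :=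
    pow_le_pow_left₀ (mul_nonneg (k_nonneg ha) (abs_nonneg _)) h2 2
  rw [mul_pow, sq_abs, sq_abs] at h3
  rw [mul_pow, sq_abs, g, Real.sq_sqrt (by positivity)]
  linarith

lemma dist_upper {b u v : ℝ} (hu0 : 0 ≤ u) (hv0 : 0 ≤ v) (hu : u ≤ b) (hv : v ≤ b) :
    dist (γ u) (γ v) ≤ g b * |u-v| := by
  rw [γ_dist]
  have hb := hu0.trans hu
  apply Real.sqrt_le_iff.2 ⟨mul_nonneg (g_nonneg _) (abs_nonneg _), ?_⟩
  have hk := key hu0 hv0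
  have h1 : u + v ≤ k b * (√(1+u^2)+√(1+v^2)) := by
    have := mul_le_mul_of_nonneg_right (k_mono hu0 hu) (sp u).le
    have := mul_le_mul_of_nonneg_right (k_mono hv0 hv) (sp v).le
    rw [k_mul] at *; linarith
  have h2 : |√(1+u^2)-√(1+v^2)| ≤ k b * |u-v| := by
    have hp : 0 < √(1+u^2)+√(1+v^2) := by positivity
    refine le_of_mul_le_mul_right ?_ hp
    rw [hk]; nlinarith [abs_nonneg (u-v)]
  have h3 := pow_le_pow_left₀ (abs_nonneg _) h2 2
  rw [mul_pow, sq_abs, sq_abs] at h3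
  rw [mul_pow, sq_abs, g, Real.sq_sqrt (by positivity)]
  linarith

lemma γ_inj : Function.Injective γ := fun u v h => by
  have := congrArg (fun p : EuclideanSpace ℝ (Fin 2) => p 1) h
  simpa [γ] using this

lemma meas_upper {a b : ℝ} {s : Set ℝ} (ha : 0 ≤ a) (hs : s ⊆ Set.Icc a b) :
    μH[(1:ℝ)] (γ '' s) ≤ ENNReal.ofReal (g b) * volume s := by
  have : LipschitzOnWith (g b).toNNReal γ s := by
    apply LipschitzOnWith.of_dist_le_mul
    intro x hx y hy
    rw [Real.coe_toNNReal _ (g_nonneg b), Real.dist_eq]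
    exact dist_upper (ha.trans (hs hx).1) (ha.trans (hs hy).1) (hs hx).2 (hs hy).2
  have := this.hausdorffMeasure_image_le (d := 1) zero_le_one
  rw [hausdorffMeasure_real, ENNReal.rpow_one] at this
  exact this

lemma meas_lower {a b : ℝ} {s : Set ℝ} (ha : 0 ≤ a) (hs : s ⊆ Set.Icc a b) :
    ENNReal.ofReal (g a) * volume s ≤ μH[(1:ℝ)] (γ '' s) := by
  have hg : 0 < g a := one_pos.trans_le (one_le_g a)
  have : LipschitzOnWith ((g a)⁻¹).toNNReal (fun p : EuclideanSpace ℝ (Fin 2) => p 1) (γ '' s) := by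
    apply LipschitzOnWith.of_dist_le_mul
    rintro _ ⟨x, hx, rfl⟩ _ ⟨y, hy, rfl⟩
    rw [Real.coe_toNNReal _ (by positivity), Real.dist_eq]
    have := dist_lower ha (hs hx).1 (hs hy).1
    rw [inv_mul_eq_div, le_div_iff₀ hg, mul_comm]
    simpa [γ] using this
  have := this.hausdorffMeasure_image_le (d := 1) zero_le_one
  rw [hausdorffMeasure_real, ENNReal.rpow_one, Set.image_image] at this
  have e : (fun x => (γ x) 1) '' s = s := by simp [γ]
  rw [e] at this
  calc _ ≤ ENNReal.ofReal (g a) * (ENNReal.ofReal (g a)⁻¹ * μH[(1:ℝ)] (γ '' s)) := by gcongr; exact this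
    _ = _ := by
      rw [← mul_assoc, ← ENNReal.ofReal_mul hg.le, mul_inv_cancel₀ hg.ne']; simp

noncomputable def G (U : ℝ) : ℝ := (μH[(1:ℝ)] (γ '' Set.Icc 0 U)).toReal

lemma fin_ (U : ℝ) : μH[(1:ℝ)] (γ '' Set.Icc 0 U) ≠ ⊤ := by
  refine ne_top_of_le_ne_top ?_ (meas_upper le_rfl subset_rfl)
  simp [ENNReal.mul_eq_top]

lemma G_diff {a b : ℝ} (ha : 0 ≤ a) (hab : a ≤ b) :
    G b - G a = (μH[(1:ℝ)] (γ '' Set.Ioc a b)).toReal := by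
  have e : γ '' Set.Icc 0 b = γ '' Set.Icc 0 a ∪ γ '' Set.Ioc a b := by
    rw [← Set.image_union, Set.Icc_union_Ioc_eq_Icc ha hab]
  have hd : Disjoint (γ '' Set.Icc 0 a) (γ '' Set.Ioc a b) := by
    rw [Set.disjoint_image_iff γ_inj, Set.disjoint_left]
    rintro x ⟨_, h⟩ ⟨h', _⟩; linarith
  have hm : MeasurableSet (γ '' Set.Icc 0 a) := (isCompact_Icc.image γ_cont).measurableSet
  have hf : μH[(1:ℝ)] (γ '' Set.Ioc a b) ≠ ⊤ := 
    ne_top_of_le_ne_top (fin_ b) (measure_mono (by rw [e]; exact Set.subset_union_right))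
  unfold G
  rw [e, measure_union' hd hm, ENNReal.toReal_add (fin_ a) hf]; ring

lemma G_upper {a b : ℝ} (ha : 0 ≤ a) (hab : a ≤ b) : G b - G a ≤ g b * (b-a) := by
  rw [G_diff ha hab]
  have := meas_upper ha (Set.Ioc_subset_Icc_self : Set.Ioc a b ⊆ Set.Icc a b)
  rw [Real.volume_Ioc, ← ENNReal.ofReal_mul (g_nonneg b)] at this
  exact ENNReal.toReal_le_of_le_ofReal (mul_nonneg (g_nonneg b) (by linarith)) this

lemma G_lower {a b : ℝ} (ha : 0 ≤ a) (hab : a ≤ b) : g a * (b-a) ≤ G b - G a := by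
  have hf : μH[(1:ℝ)] (γ '' Set.Ioc a b) ≠ ⊤ := 
    ne_top_of_le_ne_top (fin_ b) (measure_mono (Set.image_mono fun x hx => ⟨by linarith [hx.1], hx.2⟩))
  rw [G_diff ha hab]
  have := meas_lower ha (Set.Ioc_subset_Icc_self : Set.Ioc a b ⊆ Set.Icc a b)
  rw [Real.volume_Ioc, ← ENNReal.ofReal_mul (g_nonneg a)] at this
  exact (ENNReal.ofReal_le_iff_le_toReal hf).1 this

lemma G_nonneg (u : ℝ) : 0 ≤ G u := ENNReal.toReal_nonneg
lemma G_zero : G 0 = 0 := by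
  have := Measure.nullSingletonClass_hausdorff (EuclideanSpace ℝ (Fin 2)) one_pos
  simp [G]

lemma G_deriv {U : ℝ} (hU : 0 < U) : HasDerivAt G (g U) U := by
  rw [hasDerivAt_iff_tendsto_slope]
  have h0 : Filter.Tendsto (fun x => |g x - g U|) (nhdsWithin U {U}ᶜ) (nhds 0) := by
    have : Continuous (fun x => |g x - g U|) := by have := g_cont; fun_prop
    have := this.tendsto U
    simp only [sub_self, abs_zero] at this
    exact this.mono_left nhdsWithin_le_nhds
  rw [tendsto_iff_norm_sub_tendsto_zero]
  refine squeeze_zero' (Filter.Eventually.of_forall fun _ => norm_nonneg _) ?_ h0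
  filter_upwards [self_mem_nhdsWithin, nhdsWithin_le_nhds (lt_mem_nhds hU)] with x hx hx0
  rw [Real.norm_eq_abs, slope_def_field]
  rcases lt_or_gt_of_ne (show x ≠ U from hx) with h | h
  · have h1 := G_upper hx0.le h.le
    have h2 := G_lower hx0.le h.le
    have e : (G x - G U) / (x - U) = (G U - G x) / (U - x) := by
      rw [← neg_sub (G U), ← neg_sub U, neg_div_neg_eq]
    have hp : 0 < U - x := by linarith
    rw [← div_le_iff₀ hp] at h1
    rw [← le_div_iff₀ hp] at h2
    rw [e, abs_of_nonpos (by linarith), abs_of_nonpos (by linarith)]; linarith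
  · have h1 := G_upper hU.le h.le
    have h2 := G_lower hU.le h.le
    have hp : 0 < x - U := by linarith
    rw [← div_le_iff₀ hp] at h1
    rw [← le_div_iff₀ hp] at h2
    rw [abs_of_nonneg (by linarith), abs_of_nonneg (by linarith)]; linarith

lemma h_lower {U : ℝ} (hU : 2 ≤ U) : g 2 - g 1 ≤ U * g U - G U := by
  have h1 := G_upper le_rfl (zero_le_one)
  have h2 := G_upper zero_le_one (by linarith : (1:ℝ) ≤ U)
  have h3 := g_mono zero_le_two hU
  rw [G_zero] at h1
  linarith

lemma g12 : g 1 < g 2 := by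
  apply lt_of_pow_lt_pow_left₀ 2 (g_nonneg 2)
  rw [g_sq, g_sq]; norm_num

lemma h_upper {U : ℝ} (hU : 2 ≤ U) : U * g U - G U ≤ 4 := by
  have hm : MonotoneOn (fun u => G u - √2 * u + Real.arctan u) (Set.Icc 1 U) := by
    have hd : ∀ x ∈ Set.Icc 1 U, HasDerivAt (fun u => G u - √2 * u + Real.arctan u)
        (g x - √2 * 1 + 1 / (1+x^2)) x := fun x hx =>
      ((G_deriv (by linarith [hx.1])).sub ((hasDerivAt_id x).const_mul _)).add (Real.hasDerivAt_arctan x)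
    apply monotoneOn_of_deriv_nonneg (convex_Icc _ _)
    · exact fun x hx => (hd x hx).continuousAt.continuousWithinAt
    · exact fun x hx => (hd x (interior_subset hx)).differentiableAt.differentiableWithinAt
    · intro x hx
      rw [(hd x (interior_subset hx)).deriv]
      have h1 := g_sq x
      have h2 : √2 ^ 2 = 2 := Real.sq_sqrt zero_le_two
      have h3 := one_le_g x
      have h4 := g_le x
      nlinarith
  have h := hm ⟨le_rfl, by linarith⟩ ⟨by linarith, le_rfl⟩ (by linarith : (1:ℝ) ≤ U)
  simp only at h
  have h1 := Real.arctan_lt_pi_div_two U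
  have h2 : 0 ≤ Real.arctan 1 := by rw [Real.arctan_one]; positivity
  have h3 := G_nonneg 1
  have h4 := Real.pi_lt_d2
  have h5 := g_le U
  have h6 : √2 < 1.5 := by rw [Real.sqrt_lt' (by norm_num)]; norm_num
  nlinarith

end Sad

namespace Sad
open Pointwise

abbrev E2 := EuclideanSpace ℝ (Fin 2)

def S (t : ℝ) : Set E2 := {p | ‖p‖ ≤ 1 ∧ p 0 ^ 2 - p 1 ^ 2 = t}

lemma mem_S {t : ℝ} {p : E2} : p ∈ S t ↔ p 0 ^ 2 + p 1 ^ 2 ≤ 1 ∧ p 0 ^ 2 - p 1 ^ 2 = t := by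
  unfold S
  simp [EuclideanSpace.norm_eq, Real.sqrt_le_one, Fin.sum_univ_two, sq_abs]

def fx (p : E2) : E2 := !₂[-p 0, p 1]
def fy (p : E2) : E2 := !₂[p 0, -p 1]
lemma fx_iso : Isometry fx := by
  apply Isometry.of_dist_eq
  intro p q
  simp only [EuclideanSpace.dist_eq, Fin.sum_univ_two, fx, Real.dist_eq, sq_abs]
  simp; ring_nf
lemma fy_iso : Isometry fy := by
  apply Isometry.of_dist_eq
  intro p q
  simp only [EuclideanSpace.dist_eq, Fin.sum_univ_two, fy, Real.dist_eq, sq_abs]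
  simp; ring_nf
@[simp] lemma fx0 (p : E2) : fx p 0 = - p 0 := by simp [fx]
@[simp] lemma fx1 (p : E2) : fx p 1 = p 1 := by simp [fx]
@[simp] lemma fy0 (p : E2) : fy p 0 = p 0 := by simp [fy]
@[simp] lemma fy1 (p : E2) : fy p 1 = - p 1 := by simp [fy]
lemma e2ext {p q : E2} (h0 : p 0 = q 0) (h1 : p 1 = q 1) : p = q := by
  ext i; fin_cases i <;> simpa
lemma fxx (p : E2) : fx (fx p) = p := by apply e2ext <;> simp
lemma fyy (p : E2) : fy (fy p) = p := by apply e2ext <;> simp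

noncomputable def UU (t : ℝ) : ℝ := √((1-t)/(2*t))

def Q (t : ℝ) : Set E2 := {p | p ∈ S t ∧ 0 < p 0 ∧ 0 ≤ p 1}

lemma Q_eq {t : ℝ} (h0 : 0 < t) (h1 : t < 1) : Q t = (√t) • (γ '' Set.Icc 0 (UU t)) := by
  have ht := Real.sqrt_pos.2 h0
  have hts : √t^2 = t := Real.sq_sqrt h0.le
  ext p
  simp only [Q, Set.mem_ofPred_eq, mem_S, Set.mem_smul_set, Set.exists_mem_image, UU]
  constructor
  · rintro ⟨⟨ha, hb⟩, hx, hy⟩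
    refine ⟨p 1 / √t, ⟨by positivity, ?_⟩, ?_⟩
    · apply Real.le_sqrt_of_sq_le
      rw [div_pow, hts, div_le_div_iff₀ h0 (by positivity)]
      nlinarith
    · apply e2ext
      · simp only [γ, PiLp.smul_apply, smul_eq_mul]
        simp only [Matrix.cons_val_zero]
        rw [← Real.sqrt_mul h0.le, div_pow, hts]
        rw [← Real.sqrt_sq hx.le]
        congr 1
        field_simp; linarith
      · simp [γ]; field_simp
  · rintro ⟨u, ⟨hu, hu'⟩, rfl⟩
    have h2 := ssq u
    have h3 := sp u
    rw [Real.le_sqrt hu (by apply div_nonneg <;> linarith), le_div_iff₀ (by positivity)] at hu'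
    simp only [γ, PiLp.smul_apply, smul_eq_mul, Matrix.cons_val_zero, Matrix.cons_val_one]
    simp only [mul_pow, hts, h2]
    refine ⟨⟨?_, ?_⟩, ?_, ?_⟩
    · nlinarith
    · ring
    · positivity
    · positivity

lemma Q_meas {t : ℝ} (h0 : 0 < t) (h1 : t < 1) : (μH[(1:ℝ)] (Q t)).toReal = √t * G (UU t) := by
  have ht := Real.sqrt_pos.2 h0
  rw [Q_eq h0 h1, Measure.hausdorffMeasure_smul₀ zero_le_one ht.ne']
  simp [G, ENNReal.toReal_smul, NNReal.smul_def, abs_of_pos ht]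

lemma S_meas {t : ℝ} (h0 : 0 < t) : μH[(1:ℝ)] (S t) = 4 * μH[(1:ℝ)] (Q t) := by
  have := Measure.nullSingletonClass_hausdorff E2 one_pos
  have c0 : Continuous (fun p : E2 => p 0) := by fun_prop
  have c1 : Continuous (fun p : E2 => p 1) := by fun_prop
  have m0 : MeasurableSet {p : E2 | 0 < p 0} := (isOpen_lt continuous_const c0).measurableSet
  have m1 : MeasurableSet {p : E2 | 0 < p 1} := (isOpen_lt continuous_const c1).measurableSet
  have e1 : S t \ {p : E2 | 0 < p 0} = fx '' (S t ∩ {p : E2 | 0 < p 0}) := by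
    ext p
    constructor
    · rintro ⟨h, h'⟩
      refine ⟨fx p, ⟨?_, ?_⟩, fxx p⟩
      · rw [mem_S] at *; simpa using h
      · rw [mem_S] at h
        simp only [Set.mem_ofPred_eq, not_lt] at h'
        have : p 0 ≠ 0 := fun h3 => by rw [h3] at h; nlinarith [h.2]
        simpa using lt_of_le_of_ne h' this
    · rintro ⟨q, ⟨h, h'⟩, rfl⟩
      rw [Set.mem_sdiff, mem_S] at *
      simp only [Set.mem_ofPred_eq] at h'
      simp [h, h'.le]
  have e2 : (S t ∩ {p : E2 | 0 < p 0}) \ {p : E2 | 0 < p 1} = fy '' Q t := by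
    ext p
    constructor
    · rintro ⟨⟨h, h'⟩, h''⟩
      refine ⟨fy p, ⟨?_, ?_, ?_⟩, fyy p⟩
      · rw [mem_S] at *; simpa using h
      · simpa using h'
      · simpa using h''
    · rintro ⟨q, ⟨h, h', h''⟩, rfl⟩
      rw [mem_S] at h
      refine ⟨⟨mem_S.2 (by simpa using h), by simpa using h'⟩, by simpa using h''⟩
  have e3 : (S t ∩ {p : E2 | 0 < p 0}) ∩ {p : E2 | 0 < p 1} = Q t \ {!₂[√t, 0]} := by
    ext p
    constructor
    · rintro ⟨⟨h, h'⟩, h''⟩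
      refine ⟨⟨h, h', le_of_lt h''⟩, ?_⟩
      rintro rfl
      simp at h''
    · rintro ⟨⟨h, h', h''⟩, hn⟩
      refine ⟨⟨h, h'⟩, lt_of_le_of_ne h'' ?_⟩
      intro h3
      apply hn
      rw [mem_S] at h
      apply e2ext
      · have h4 := h.2
        rw [← h3] at h4
        have : t = p 0 ^ 2 := by linarith
        simp [this, Real.sqrt_sq h'.le]
      · simp [← h3]
  rw [← measure_inter_add_sdiff (S t) m0, e1, fx_iso.hausdorffMeasure_image (Or.inl zero_le_one),
    ← measure_inter_add_sdiff (S t ∩ _) m1, e2, fy_iso.hausdorffMeasure_image (Or.inl zero_le_one),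
    e3, measure_sdiff_null (measure_singleton _)]
  ring

lemma phi_eq {t : ℝ} (h0 : 0 < t) (h1 : t < 1) :
    saddleLevelLength t = 4 * (√t * G (UU t)) := by
  change (μH[(1:ℝ)] (S t)).toReal = _
  rw [S_meas h0, ENNReal.toReal_mul, Q_meas h0 h1]; simp

lemma phi_deriv {t : ℝ} (h0 : 0 < t) (h1 : t < 1) :
    HasDerivAt saddleLevelLength
      (-(2 / √t * (UU t * g (UU t) - G (UU t) + g (UU t) / (2 * UU t)))) t := by
  have ht := Real.sqrt_pos.2 h0
  have hq : 0 < (1-t)/(2*t) := div_pos (by linarith) (by linarith)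
  have hU : 0 < UU t := Real.sqrt_pos.2 hq
  have hUs : UU t ^ 2 = (1-t)/(2*t) := Real.sq_sqrt hq.le
  have hts : √t^2 = t := Real.sq_sqrt h0.le
  have d1 : HasDerivAt UU (-(1/(4 * t^2 * UU t))) t := by
    have : HasDerivAt (fun t : ℝ => (1-t)/(2*t)) (-(1/(2*t^2))) t := by
      have := ((hasDerivAt_id t).const_sub 1).div ((hasDerivAt_id t).const_mul 2) (by simpa using h0.ne')
      refine this.congr_deriv ?_
      simp only [id]; field_simp; ring
    have := this.sqrt hq.ne'
    refine this.congr_deriv ?_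
    change _ / (2 * UU t) = _
    field_simp; ring
  have d2 : HasDerivAt (fun t => 4 * (√t * G (UU t)))
      (4 * (1 / (2 * √t) * G (UU t) + √t * (g (UU t) * -(1/(4 * t^2 * UU t))))) t :=
    ((Real.hasDerivAt_sqrt h0.ne').mul ((G_deriv hU).comp t d1)).const_mul 4
  have d3 := d2.congr_of_eventuallyEq (f₁ := saddleLevelLength) (by
    filter_upwards [Ioo_mem_nhds h0 h1] with s hs using phi_eq hs.1 hs.2)
  refine d3.congr_deriv ?_
  have e : 1 = t * (1 + 2 * UU t ^ 2) := by rw [hUs]; field_simp; ring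
  generalize UU t = U at *
  generalize G U = X
  generalize g U = Y
  generalize √t = r at *
  subst hts
  have e' : U^2 = (1 - r^2)/(2*r^2) := hUs
  field_simp
  linear_combination (-2 * Y) * e

end Sad

/-- For `T(x, y) = x² − y²` and `φ(t)` the `ℋ¹`-length of the level set
`T⁻¹(t)` inside the closed unit disk, there exist `δ > 0` and `c, C > 0` such that `φ`
is differentiable on `(0, δ)` and `c t^{−1/2} ≤ −φ'(t) ≤ C t^{−1/2}` for `t ∈ (0, δ)`. -/
theorem stmt10 :
    ∃ δ > (0 : ℝ), ∃ c > (0 : ℝ), ∃ C > (0 : ℝ), ∀ t ∈ Set.Ioo (0 : ℝ) δ,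
      DifferentiableAt ℝ saddleLevelLength t ∧
      c * t ^ (-(1 / 2) : ℝ) ≤ -deriv saddleLevelLength t ∧
      -deriv saddleLevelLength t ≤ C * t ^ (-(1 / 2) : ℝ) := by
  refine ⟨1/9, by norm_num, 2 * (Sad.g 2 - Sad.g 1), by linarith [Sad.g12], 10, by norm_num, ?_⟩
  rintro t ⟨h0, h1⟩
  have hd := Sad.phi_deriv h0 (by linarith)
  have ht := Real.sqrt_pos.2 h0
  have hU : 2 ≤ Sad.UU t := by
    apply Real.le_sqrt_of_sq_le
    rw [le_div_iff₀ (by positivity)]; linarith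
  refine ⟨hd.differentiableAt, ?_⟩
  rw [hd.deriv, neg_neg, Real.rpow_neg h0.le, ← Real.sqrt_eq_rpow]
  have l := Sad.h_lower hU
  have u := Sad.h_upper hU
  have g1 := Sad.one_le_g (Sad.UU t)
  have g2 := Sad.g_le (Sad.UU t)
  have h6 : √2 < 1.5 := by rw [Real.sqrt_lt' (by norm_num)]; norm_num
  have p0 : 0 ≤ Sad.g (Sad.UU t) / (2 * Sad.UU t) := by positivity
  have p1 : Sad.g (Sad.UU t) / (2 * Sad.UU t) ≤ 1 := by
    rw [div_le_one (by positivity)]; linarith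
  have hi : 0 < (√t)⁻¹ := by positivity
  rw [div_eq_mul_inv]
  constructor <;> nlinarith
end
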